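/- arXiv:2107.00550 — 2 statements merged into one kernel-verified Lean document; each statement's English description precedes it below -/
import Mathlib

section
/- Let c ∈ (0,1) and let f : {0,1}^n → [0,1] be a random function chosen according to the uniform (Lebesgue product) measure on [0,1]^{{0,1}^n}. Then the probability p_n that f is c-Lipschitz satisfies p_n = c^{2^n + o(2^n)}; that is, 2^{−n}·log p_n → log c as n → ∞. -/
open MeasureTheory Filter Set

noncomputable section

/-- The unit cube `[0,1]^ι`. -/
def unitCube (ι : Type) : Set (ι → ℝ) := Set.univ.pi fun _ => Set.Icc (0:ℝ) 1

/-- `f : {0,1}^n → [0,1]` is `c`-Lipschitz if changing one coordinate of the input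
changes the value by at most `c`. -/
def IsCLipschitz (n : ℕ) (c : ℝ) (f : (Fin n → Bool) → ℝ) : Prop :=
  ∀ u v : Fin n → Bool,
    (Finset.univ.filter (fun i => u i ≠ v i)).card = 1 → |f u - f v| ≤ c

/-! The cube `[0,c]^V` gives `p ≥ c^|V|` on any graph, and the matching upper bound holds for every
`d`-regular bipartite graph with `d` large. Given the values `a` on one side, the values on the
other side are independent, so `p` is the expectation of a product, over the vertices `v` of the
second side, of functions of the values of `a` at the `d` neighbours of `v`. Each coordinate of `a`
enters exactly `d` factors, so Finner's inequality (Hölder's inequality, one coordinate at a time)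
bounds `p` by the product of the `L^d` norms of the factors: the worst case is the complete
bipartite graph on `d + d` vertices. There, if the values on one side spread over an interval of
length `r`, each value on the other side is confined to an interval of length `2c - r`, and
`r (2c - r) ≤ c²`. Rounding the minimum and the maximum on the first side to multiples of `1/d`
leaves `(d + 1)²` cases, which is negligible after taking the `d`-th root. -/

open scoped ENNReal

section Finner

variable {ι J : Type*} {X : ι → Type*} [∀ i, MeasurableSpace (X i)]

theorem lintegral_prod_rpow_le_of_forall_notMem_eq {Ω : Type*} [MeasurableSpace Ω]
    {μ : Measure Ω} [IsProbabilityMeasure μ] [Fintype J] {T : Finset J} {p : J → ℝ}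
    (hp₀ : ∀ j ∈ T, 0 ≤ p j) (hp₁ : ∑ j ∈ T, p j = 1) {K : J → Ω → ℝ≥0∞}
    (hK : ∀ j ∈ T, Measurable (K j)) {a : J → ℝ≥0∞} (hKa : ∀ j ∉ T, ∀ y, K j y = a j) :
    ∫⁻ y, ∏ j, K j y ^ p j ∂μ ≤ ∏ j, (∫⁻ y, K j y ∂μ) ^ p j := by
  classical
  have split_integrand (y : Ω) :
      ∏ j, K j y ^ p j = (∏ j ∈ T, K j y ^ p j) * ∏ j ∈ Tᶜ, a j ^ p j := by
    rw [← Finset.prod_mul_prod_compl T]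
    congr 1
    exact Finset.prod_congr rfl fun j hj => by rw [hKa j (Finset.mem_compl.1 hj)]
  have integral_eq (j : J) (hj : j ∈ Tᶜ) : ∫⁻ y, K j y ∂μ = a j := by
    simp [hKa j (Finset.mem_compl.1 hj)]
  calc ∫⁻ y, ∏ j, K j y ^ p j ∂μ
      = (∫⁻ y, ∏ j ∈ T, K j y ^ p j ∂μ) * ∏ j ∈ Tᶜ, a j ^ p j := by
        simp_rw [split_integrand]
        exact lintegral_mul_const _ (Finset.measurable_prod _ fun j hj => (hK j hj).pow_const _)
    _ ≤ (∏ j ∈ T, (∫⁻ y, K j y ∂μ) ^ p j) * ∏ j ∈ Tᶜ, a j ^ p j := by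
        gcongr
        exact ENNReal.lintegral_prod_norm_pow_le T (fun j hj => (hK j hj).aemeasurable) hp₁ hp₀
    _ = ∏ j, (∫⁻ y, K j y ∂μ) ^ p j := by
        rw [← Finset.prod_mul_prod_compl T]
        congr 1
        exact Finset.prod_congr rfl fun j hj => by rw [integral_eq j hj]

theorem lmarginal_update_of_dependsOn [DecidableEq ι] {μ : ∀ i, Measure (X i)}
    [∀ i, SigmaFinite (μ i)] {f : (∀ i, X i) → ℝ≥0∞} (hf : Measurable f) {t : Set ι}
    (hft : DependsOn f t) {s : Finset ι} {i : ι} (his : i ∉ s) (hit : i ∉ t)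
    (x : ∀ i, X i) (y : X i) :
    lmarginal μ s f (Function.update x i y) = lmarginal μ s f x := by
  rw [lmarginal_update_of_notMem hf his]
  congr 1
  funext z
  exact hft fun k hk => Function.update_of_ne (ne_of_mem_of_not_mem hk hit) y z

variable [DecidableEq ι] [Fintype J] {μ : ∀ i, Measure (X i)} [∀ i, IsProbabilityMeasure (μ i)]
  {S : J → Finset ι} {p : J → ℝ} {H : J → (∀ i, X i) → ℝ≥0∞}

theorem lmarginal_prod_rpow_le_prod_lmarginal_rpow (hp₀ : ∀ j, 0 ≤ p j)
    (hp₁ : ∀ i, ∑ j with i ∈ S j, p j = 1) (hH : ∀ j, Measurable (H j))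
    (hHS : ∀ j, DependsOn (H j) (S j)) (s : Finset ι) (x : ∀ i, X i) :
    lmarginal μ s (fun x => ∏ j, H j x ^ p j) x ≤ ∏ j, lmarginal μ s (H j) x ^ p j := by
  induction s using Finset.induction_on generalizing x with
  | empty => simp
  | insert i s hi ih =>
    have prod_measurable : Measurable fun x => ∏ j, H j x ^ p j :=
      Finset.measurable_prod _ fun j _ => (hH j).pow_const _
    simp_rw [lmarginal_insert _ prod_measurable hi, lmarginal_insert _ (hH _) hi]
    refine (lintegral_mono fun y => ih _).trans ?_
    exact lintegral_prod_rpow_le_of_forall_notMem_eq (fun j _ => hp₀ j) (hp₁ i)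
      (fun j _ => ((hH j).lmarginal μ).comp (measurable_update x))
      fun j hj y => lmarginal_update_of_dependsOn (hH j) (hHS j) hi (by simpa using hj) x y

theorem finner_inequality [Fintype ι] (hp₀ : ∀ j, 0 ≤ p j)
    (hp₁ : ∀ i, ∑ j with i ∈ S j, p j = 1) (hH : ∀ j, Measurable (H j))
    (hHS : ∀ j, DependsOn (H j) (S j)) :
    ∫⁻ x, ∏ j, H j x ^ p j ∂Measure.pi μ ≤ ∏ j, (∫⁻ x, H j x ∂Measure.pi μ) ^ p j := by
  have ⟨x⟩ : Nonempty (∀ i, X i) := (Measure.pi μ).nonempty_of_neZero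
  simpa only [lmarginal_univ] using
    lmarginal_prod_rpow_le_prod_lmarginal_rpow (μ := μ) hp₀ hp₁ hH hHS Finset.univ x

end Finner

section UniformMeasure

/-- The uniform probability measure on `[0,1]`, as a measure on `ℝ`. -/
def uniformIcc : Measure ℝ := volume.restrict (Icc 0 1)

instance : IsProbabilityMeasure uniformIcc := ⟨by simp [uniformIcc]⟩

theorem uniformIcc_Icc_le (x y : ℝ) : uniformIcc (Icc x y) ≤ ENNReal.ofReal (y - x) :=
  (Measure.restrict_apply_le _ _).trans Real.volume_Icc.le

theorem pi_uniformIcc (ι : Type) [Fintype ι] :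
    Measure.pi (fun _ : ι => uniformIcc) = (volume : Measure (ι → ℝ)).restrict (unitCube ι) := by
  rw [unitCube, volume_pi, Measure.restrict_pi_pi]
  rfl

theorem ae_mem_unitCube (ι : Type) [Fintype ι] :
    ∀ᵐ a ∂Measure.pi fun _ : ι => uniformIcc, a ∈ unitCube ι := by
  rw [pi_uniformIcc]
  exact ae_restrict_mem (MeasurableSet.univ_pi fun _ => measurableSet_Icc)

end UniformMeasure

section CompatibleValues

variable {ι : Type*}

/-- The values within `c` of every `a u` with `u ∈ S`: those which a `c`-Lipschitz function may
take at a vertex whose neighbours are the elements of `S` and carry the values `a`. -/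
def compatibleValues (c : ℝ) (S : Finset ι) (a : ι → ℝ) : Set ℝ := {y | ∀ u ∈ S, |y - a u| ≤ c}

theorem dependsOn_compatibleValues (c : ℝ) (S : Finset ι) :
    DependsOn (compatibleValues c S) (S : Set ι) := by
  intro a b hab
  ext y
  exact forall₂_congr fun u hu => by rw [hab u hu]

theorem measurableSet_setOf_mem_compatibleValues (c : ℝ) (S : Finset ι) :
    MeasurableSet {q : (ι → ℝ) × ℝ | q.2 ∈ compatibleValues c S q.1} := by
  have eq_biInter : {q : (ι → ℝ) × ℝ | q.2 ∈ compatibleValues c S q.1} =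
      ⋂ u ∈ S, {q | |q.2 - q.1 u| ≤ c} := by
    ext q
    simp [compatibleValues]
  rw [eq_biInter]
  exact Finset.measurableSet_biInter S fun u _ => measurableSet_le (by fun_prop) measurable_const

theorem compatibleValues_subset_Icc {c x y : ℝ} {S : Finset ι} {a : ι → ℝ} {u v : ι}
    (hu : u ∈ S) (hv : v ∈ S) (hx : x ≤ a u) (hy : a v ≤ y) :
    compatibleValues c S a ⊆ Icc (x - c) (y + c) := fun z hz =>
  ⟨by linarith [(abs_le.1 (hz u hu)).1], by linarith [(abs_le.1 (hz v hv)).2]⟩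

end CompatibleValues

section Grid

theorem floor_mul_div_le {N : ℕ} (hN : 0 < N) {x : ℝ} (hx : 0 ≤ x) : (⌊N * x⌋₊ : ℝ) / N ≤ x := by
  rw [div_le_iff₀' (by positivity)]
  exact Nat.floor_le (by positivity)

theorem le_floor_mul_add_one_div {N : ℕ} (hN : 0 < N) (x : ℝ) : x ≤ (⌊N * x⌋₊ + 1 : ℝ) / N := by
  rw [le_div_iff₀' (by positivity)]
  exact (Nat.lt_floor_add_one _).le

/-- The interval between the `i`-th and the `(j+1)`-st point of the grid of mesh `1 / N`. -/
def gridInterval (N i j : ℕ) : Set ℝ := Icc ((i : ℝ) / N) ((j + 1) / N)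

theorem exists_gridInterval {ι : Type} {N : ℕ} (hN : 0 < N) (c : ℝ) {S : Finset ι}
    (hS : S.Nonempty) {a : ι → ℝ} (ha : a ∈ unitCube ι) :
    ∃ i j : Fin (N + 1), a ∈ (S : Set ι).pi (fun _ => gridInterval N i j) ∧
      compatibleValues c S a ⊆ Icc ((j : ℝ) / N - c) ((i + 1) / N + c) := by
  have ha₀ (u : ι) : 0 ≤ a u := (ha u (mem_univ u)).1
  have floor_lt (u : ι) : ⌊N * a u⌋₊ < N + 1 :=
    Nat.lt_succ_of_le (Nat.floor_le_of_le
      (mul_le_of_le_one_right (by positivity) (ha u (mem_univ u)).2))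
  obtain ⟨u, hu, u_min⟩ := S.exists_min_image a hS
  obtain ⟨v, hv, v_max⟩ := S.exists_max_image a hS
  refine ⟨⟨_, floor_lt u⟩, ⟨_, floor_lt v⟩, fun w hw => ⟨?_, ?_⟩, ?_⟩
  · exact (floor_mul_div_le hN (ha₀ u)).trans (u_min w hw)
  · exact (v_max w hw).trans (le_floor_mul_add_one_div hN (a v))
  · exact compatibleValues_subset_Icc hv hu (floor_mul_div_le hN (ha₀ v))
      (le_floor_mul_add_one_div hN (a u))

theorem ofReal_mul_ofReal_le_ofReal_half_add_sq (x y : ℝ) :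
    ENNReal.ofReal x * ENNReal.ofReal y ≤ ENNReal.ofReal ((x + y) / 2) ^ 2 := by
  rcases le_total x 0 with hx | hx
  · simp [ENNReal.ofReal_of_nonpos hx]
  rcases le_total y 0 with hy | hy
  · simp [ENNReal.ofReal_of_nonpos hy]
  rw [← ENNReal.ofReal_mul hx, ← ENNReal.ofReal_pow (by positivity)]
  exact ENNReal.ofReal_le_ofReal (by nlinarith [sq_nonneg (x - y)])

/-- The two intervals have total length `2 (c + 1 / N)`, whatever `i` and `j` are. -/
theorem uniformIcc_pow_mul_pi_gridInterval_le {ι : Type*} [Fintype ι] {N : ℕ}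
    (c : ℝ) (S : Finset ι) (i j : ℕ) :
    uniformIcc (Icc ((j : ℝ) / N - c) ((i + 1) / N + c)) ^ S.card *
        Measure.pi (fun _ : ι => uniformIcc) ((S : Set ι).pi fun _ => gridInterval N i j) ≤
      (ENNReal.ofReal (c + 1 / N) ^ 2) ^ S.card := by
  rw [Measure.pi_pi_finset, Finset.prod_const, ← mul_pow]
  gcongr
  calc uniformIcc (Icc ((j : ℝ) / N - c) ((i + 1) / N + c)) * uniformIcc (gridInterval N i j)
      ≤ ENNReal.ofReal ((i + 1) / N + c - (j / N - c)) * ENNReal.ofReal ((j + 1) / N - i / N) :=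
        mul_le_mul' (uniformIcc_Icc_le _ _) (uniformIcc_Icc_le _ _)
    _ ≤ ENNReal.ofReal (((i + 1) / N + c - (j / N - c) + ((j + 1) / N - i / N)) / 2) ^ 2 :=
        ofReal_mul_ofReal_le_ofReal_half_add_sq _ _
    _ = ENNReal.ofReal (c + 1 / N) ^ 2 := by
        congr 2
        ring

theorem lintegral_uniformIcc_compatibleValues_pow_le {ι : Type} [Fintype ι] {N : ℕ} (hN : 0 < N)
    (c : ℝ) {S : Finset ι} (hS : S.Nonempty) :
    ∫⁻ a, uniformIcc (compatibleValues c S a) ^ S.card ∂Measure.pi (fun _ : ι => uniformIcc) ≤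
      (N + 1) ^ 2 * (ENNReal.ofReal (c + 1 / N) ^ 2) ^ S.card := by
  let box (ij : Fin (N + 1) × Fin (N + 1)) : Set (ι → ℝ) :=
    (S : Set ι).pi fun _ => gridInterval N ij.1 ij.2
  let weight (ij : Fin (N + 1) × Fin (N + 1)) : ℝ≥0∞ :=
    uniformIcc (Icc ((ij.2 : ℝ) / N - c) ((ij.1 + 1) / N + c)) ^ S.card
  have box_measurable (ij) : MeasurableSet (box ij) :=
    MeasurableSet.pi S.countable_toSet fun _ _ => measurableSet_Icc
  have pointwise_le : ∀ᵐ a ∂Measure.pi (fun _ : ι => uniformIcc),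
      uniformIcc (compatibleValues c S a) ^ S.card ≤
        ∑ ij, (box ij).indicator (fun _ => weight ij) a := by
    filter_upwards [ae_mem_unitCube ι] with a ha
    obtain ⟨i, j, a_mem, values_subset⟩ := exists_gridInterval hN c hS ha
    calc _ ≤ weight (i, j) := pow_le_pow_left' (measure_mono values_subset) _
      _ = (box (i, j)).indicator (fun _ => weight (i, j)) a :=
        (indicator_of_mem (s := box (i, j)) a_mem fun _ => weight (i, j)).symm
      _ ≤ _ := Finset.single_le_sum_of_canonicallyOrdered
        (f := fun ij => (box ij).indicator (fun _ => weight ij) a) (Finset.mem_univ (i, j))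
  calc _ ≤ ∫⁻ a, ∑ ij, (box ij).indicator (fun _ => weight ij) a
          ∂Measure.pi (fun _ : ι => uniformIcc) := lintegral_mono_ae pointwise_le
    _ = ∑ ij, weight ij * Measure.pi (fun _ : ι => uniformIcc) (box ij) := by
        rw [lintegral_finsetSum _ fun ij _ => measurable_const.indicator (box_measurable ij)]
        simp_rw [lintegral_indicator_const (box_measurable _)]
    _ ≤ ∑ _ : Fin (N + 1) × Fin (N + 1), (ENNReal.ofReal (c + 1 / N) ^ 2) ^ S.card :=
        Finset.sum_le_sum fun ij _ => uniformIcc_pow_mul_pi_gridInterval_le c S ij.1 ij.2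
    _ = _ := by simp [sq]

end Grid

section Incidence

variable {A B : Type*}

theorem measurableSet_forall_mem_compatibleValues [Countable B] (c : ℝ) (N : B → Finset A) :
    MeasurableSet {q : (A → ℝ) × (B → ℝ) | ∀ v, q.2 v ∈ compatibleValues c (N v) q.1} := by
  rw [ofPred_forall]
  refine MeasurableSet.iInter fun v => ?_
  exact (by fun_prop : Measurable fun q : (A → ℝ) × (B → ℝ) => (q.1, q.2 v))
    (measurableSet_setOf_mem_compatibleValues c (N v))

variable [Fintype A] [Fintype B]

theorem prod_pi_forall_mem_compatibleValues (c : ℝ) (N : B → Finset A) :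
    (Measure.pi fun _ : A => uniformIcc).prod (Measure.pi fun _ : B => uniformIcc)
        {q | ∀ v, q.2 v ∈ compatibleValues c (N v) q.1} =
      ∫⁻ a, ∏ v, uniformIcc (compatibleValues c (N v) a)
        ∂Measure.pi (fun _ : A => uniformIcc) := by
  rw [Measure.prod_apply (measurableSet_forall_mem_compatibleValues c N)]
  refine lintegral_congr fun a => ?_
  rw [← Measure.pi_pi]
  congr 1
  ext b
  simp

end Incidence

/-- The growth rate `r` in the upper bound `r ^ |V|` for the probability that a random function on
a `d`-regular bipartite graph with vertex set `V` is `c`-Lipschitz. The factor `(d + 1)^(1/d)`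
counts grid intervals and `1/d` is the rounding error. -/
def lipschitzRate (c : ℝ) (d : ℕ) : ℝ := (d + 1) ^ (1 / d : ℝ) * (c + 1 / d)

theorem lipschitzRate_pos {c : ℝ} (hc : 0 < c) (d : ℕ) : 0 < lipschitzRate c d := by
  unfold lipschitzRate
  positivity

theorem tendsto_lipschitzRate (c : ℝ) : Tendsto (lipschitzRate c) atTop (nhds c) := by
  have root_tendsto : Tendsto (fun d : ℕ => ((d : ℝ) + 1) ^ (1 / d : ℝ)) atTop (nhds 1) := by
    simpa [Function.comp_def] using (tendsto_rpow_div_mul_add 1 1 (-1) zero_ne_one).comp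
      (tendsto_atTop_add_const_right atTop (1 : ℝ) (tendsto_natCast_atTop_atTop (R := ℝ)))
  have product_tendsto := root_tendsto.mul (tendsto_one_div_atTop_nhds_zero_nat.const_add c)
  rw [add_zero, one_mul] at product_tendsto
  exact product_tendsto

theorem rpow_one_div_eq_ofReal_lipschitzRate_sq (c : ℝ) {d : ℕ} (hd : 0 < d) :
    (((d : ℝ≥0∞) + 1) ^ 2 * (ENNReal.ofReal (c + 1 / d) ^ 2) ^ d) ^ (1 / d : ℝ) =
      ENNReal.ofReal (lipschitzRate c d) ^ 2 := by
  have ofReal_root : ENNReal.ofReal (((d : ℝ) + 1) ^ (1 / d : ℝ)) =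
      ((d : ℝ≥0∞) + 1) ^ (1 / d : ℝ) := by
    rw [← ENNReal.ofReal_rpow_of_pos (by positivity), ENNReal.ofReal_add (by positivity) (by simp)]
    simp
  rw [lipschitzRate, ENNReal.ofReal_mul (by positivity), ofReal_root, mul_pow,
    ENNReal.mul_rpow_of_nonneg _ _ (by positivity), one_div,
    ENNReal.pow_rpow_inv_natCast hd.ne', ← ENNReal.rpow_natCast_mul, ← ENNReal.rpow_mul_natCast]
  push_cast
  ring_nf

theorem prod_pi_forall_mem_compatibleValues_le {A B : Type} [Fintype A] [Fintype B]
    [DecidableEq A] (c : ℝ) {d : ℕ} (hd : 0 < d) {N : B → Finset A}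
    (hB : ∀ v, (N v).card = d) (hA : ∀ u, (Finset.univ.filter (u ∈ N ·)).card = d) :
    (Measure.pi fun _ : A => uniformIcc).prod (Measure.pi fun _ : B => uniformIcc)
        {q | ∀ v, q.2 v ∈ compatibleValues c (N v) q.1} ≤
      (ENNReal.ofReal (lipschitzRate c d) ^ 2) ^ Fintype.card B := by
  have degree_mul_inv : (d : ℝ) * (1 / d) = 1 := mul_one_div_cancel (by positivity)
  calc _ = ∫⁻ a, ∏ v, (uniformIcc (compatibleValues c (N v) a) ^ d) ^ (1 / d : ℝ)
          ∂Measure.pi (fun _ : A => uniformIcc) := by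
        simp_rw [prod_pi_forall_mem_compatibleValues, one_div,
          ENNReal.pow_rpow_inv_natCast hd.ne']
    _ ≤ ∏ v, (∫⁻ a, uniformIcc (compatibleValues c (N v) a) ^ d
          ∂Measure.pi (fun _ : A => uniformIcc)) ^ (1 / d : ℝ) := by
        refine finner_inequality (S := N) (fun _ => by positivity)
          (fun u => ?_) (fun v => ?_) fun v a b hab => ?_
        · rw [Finset.sum_const, hA, nsmul_eq_mul, degree_mul_inv]
        · exact (measurable_measure_prodMk_left
            (measurableSet_setOf_mem_compatibleValues c (N v))).pow_const d
        · rw [dependsOn_compatibleValues c (N v) hab]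
    _ ≤ ∏ _ : B, ENNReal.ofReal (lipschitzRate c d) ^ 2 := by
        refine Finset.prod_le_prod' fun v _ => ?_
        have integral_le := lintegral_uniformIcc_compatibleValues_pow_le hd c
          (Finset.card_pos.1 (hd.trans_eq (hB v).symm))
        rw [hB v] at integral_le
        rw [← rpow_one_div_eq_ofReal_lipschitzRate_sq c hd]
        gcongr
    _ = _ := by simp

section Graph

/-- The functions `V → [0,1]` that change by at most `c` along each edge of `G`. -/
def lipschitzCube {V : Type} (G : SimpleGraph V) (c : ℝ) : Set (V → ℝ) :=
  {f | f ∈ unitCube V ∧ ∀ u v, G.Adj u v → |f u - f v| ≤ c}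

variable {V : Type} {G : SimpleGraph V} {s : Set V}

theorem exists_isBipartiteWith_compl (hG : G.IsBipartite) :
    ∃ s : Set V, G.IsBipartiteWith s sᶜ := by
  obtain ⟨s, t, hst⟩ := hG.exists_isBipartiteWith
  have t_subset : t ⊆ sᶜ := hst.disjoint.subset_compl_left
  exact ⟨s, disjoint_compl_right, fun u v huv =>
    (hst.mem_of_adj huv).imp (And.imp_right (@t_subset v)) (And.imp_left (@t_subset u))⟩

theorem card_subtype_neighborFinset {v : V} [Fintype (G.neighborSet v)] {p : V → Prop}
    [DecidablePred p] (hp : ∀ u, G.Adj v u → p u) :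
    ((G.neighborFinset v).subtype p).card = G.degree v := by
  rw [Finset.card_subtype, Finset.filter_true_of_mem (by simpa using hp),
    G.card_neighborFinset_eq_degree]

variable [Fintype V]

theorem pow_card_le_volume_lipschitzCube (G : SimpleGraph V) {c : ℝ} (hc : c ≤ 1) :
    ENNReal.ofReal c ^ Fintype.card V ≤ volume (lipschitzCube G c) := by
  calc ENNReal.ofReal c ^ Fintype.card V = volume (univ.pi fun _ : V => Icc 0 c) := by
        rw [volume_pi_pi]
        simp
    _ ≤ volume (lipschitzCube G c) := by
        refine measure_mono fun f hf =>
          ⟨fun u hu => Icc_subset_Icc_right hc (hf u hu), fun u v _ => ?_⟩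
        simpa [Real.dist_eq] using Real.dist_le_of_mem_Icc (hf u (mem_univ u)) (hf v (mem_univ v))

variable [G.LocallyFinite] [DecidablePred (· ∈ s)] {d : ℕ}

theorem volume_lipschitzCube_le_prod (c : ℝ) :
    volume (lipschitzCube G c) ≤
      (Measure.pi fun _ : {v // v ∈ s} => uniformIcc).prod
        (Measure.pi fun _ : {v // v ∉ s} => uniformIcc)
        {q | ∀ v, q.2 v ∈ compatibleValues c ((G.neighborFinset v.1).subtype (· ∈ s)) q.1} := by
  rw [← (measurePreserving_piEquivPiSubtypeProd (fun _ : V => uniformIcc) (· ∈ s)).measure_preimage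
    (measurableSet_forall_mem_compatibleValues c _).nullMeasurableSet, pi_uniformIcc,
    ← Measure.restrict_eq_self volume fun f hf => hf.1]
  refine measure_mono fun f hf v u hu => hf.2 v u ?_
  simpa using hu

theorem card_eq_two_mul_card_compl (hs : G.IsBipartiteWith s sᶜ) (hd : 0 < d)
    (hreg : G.IsRegularOfDegree d) : Fintype.card V = 2 * Fintype.card {v // v ∉ s} := by
  have sum_degrees := SimpleGraph.isBipartiteWith_sum_degrees_eq
    (s := s.toFinset) (t := (sᶜ).toFinset) (by simpa using hs)
  simp only [hreg.degree_eq, Finset.sum_const, smul_eq_mul, toFinset_card] at sum_degrees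
  have card_eq := Nat.eq_of_mul_eq_mul_right hd sum_degrees
  rw [← Fintype.card_congr (Equiv.sumCompl (· ∈ s)), Fintype.card_sum, two_mul]
  exact congrArg (· + _) card_eq

theorem volume_lipschitzCube_le (hG : G.IsBipartite) (hd : 0 < d)
    (hreg : G.IsRegularOfDegree d) (c : ℝ) :
    volume (lipschitzCube G c) ≤ ENNReal.ofReal (lipschitzRate c d) ^ Fintype.card V := by
  classical
  obtain ⟨s, hs⟩ := exists_isBipartiteWith_compl hG
  rw [card_eq_two_mul_card_compl hs hd hreg, pow_mul]
  refine (volume_lipschitzCube_le_prod (s := s) c).trans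
    (prod_pi_forall_mem_compatibleValues_le c hd (fun v => ?_) fun u => ?_)
  · rw [card_subtype_neighborFinset fun u huv => hs.symm.mem_of_mem_adj v.2 huv, hreg v]
  · rw [← hreg u, ← card_subtype_neighborFinset fun v huv => hs.mem_of_mem_adj u.2 huv]
    congr 1
    ext v
    simp [G.adj_comm]

end Graph

theorem log_le_log_div_of_pow_le {x y : ℝ} {m : ℕ} (hm : 0 < m) (hx : 0 < x) (hxy : x ^ m ≤ y) :
    Real.log x ≤ Real.log y / m := by
  rw [le_div_iff₀' (by positivity), ← Real.log_pow]
  exact Real.log_le_log (by positivity) hxy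

theorem log_div_le_log_of_le_pow {x y : ℝ} {m : ℕ} (hm : 0 < m) (hy : 0 < y) (hxy : y ≤ x ^ m) :
    Real.log y / m ≤ Real.log x := by
  rw [div_le_iff₀' (by positivity), ← Real.log_pow]
  exact Real.log_le_log hy hxy

theorem log_volume_lipschitzCube_mem_Icc {V : Type} [Fintype V] [Nonempty V] {G : SimpleGraph V}
    [G.LocallyFinite] {d : ℕ} (hd : 0 < d) (hreg : G.IsRegularOfDegree d) (hG : G.IsBipartite)
    {c : ℝ} (hc₀ : 0 < c) (hc₁ : c ≤ 1) :
    Real.log (volume (lipschitzCube G c)).toReal / Fintype.card V ∈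
      Icc (Real.log c) (Real.log (lipschitzRate c d)) := by
  have volume_ne_top : volume (lipschitzCube G c) ≠ ∞ :=
    ne_top_of_le_ne_top (ENNReal.pow_ne_top ENNReal.ofReal_ne_top)
      (volume_lipschitzCube_le hG hd hreg c)
  have pow_le : c ^ Fintype.card V ≤ (volume (lipschitzCube G c)).toReal := by
    rw [← ENNReal.ofReal_le_iff_le_toReal volume_ne_top, ENNReal.ofReal_pow hc₀.le]
    exact pow_card_le_volume_lipschitzCube G hc₁
  have le_pow : (volume (lipschitzCube G c)).toReal ≤ lipschitzRate c d ^ Fintype.card V := by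
    refine ENNReal.toReal_le_of_le_ofReal (pow_nonneg (lipschitzRate_pos hc₀ d).le _) ?_
    rw [ENNReal.ofReal_pow (lipschitzRate_pos hc₀ d).le]
    exact volume_lipschitzCube_le hG hd hreg c
  exact ⟨log_le_log_div_of_pow_le Fintype.card_pos hc₀ pow_le,
    log_div_le_log_of_le_pow Fintype.card_pos (lt_of_lt_of_le (by positivity) pow_le) le_pow⟩

theorem probability_lipschitz_general {ι : Type*} {l : Filter ι} {V : ι → Type}
    [∀ k, Fintype (V k)] [∀ k, Nonempty (V k)] {G : ∀ k, SimpleGraph (V k)}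
    [∀ k, (G k).LocallyFinite] {d : ι → ℕ} (hd : Tendsto d l atTop)
    (hreg : ∀ k, (G k).IsRegularOfDegree (d k)) (hG : ∀ k, (G k).IsBipartite)
    {c : ℝ} (hc₀ : 0 < c) (hc₁ : c ≤ 1) :
    Tendsto (fun k => Real.log (volume (lipschitzCube (G k) c)).toReal / Fintype.card (V k))
      l (nhds (Real.log c)) := by
  have log_mem : ∀ᶠ k in l, Real.log (volume (lipschitzCube (G k) c)).toReal / Fintype.card (V k) ∈
      Icc (Real.log c) (Real.log (lipschitzRate c (d k))) :=
    (hd.eventually_gt_atTop 0).mono fun k hk =>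
      log_volume_lipschitzCube_mem_Icc hk (hreg k) (hG k) hc₀ hc₁
  exact tendsto_of_tendsto_of_tendsto_of_le_of_le' tendsto_const_nhds
    (((tendsto_lipschitzRate c).comp hd).log hc₀.ne')
    (log_mem.mono fun _ h => h.1) (log_mem.mono fun _ h => h.2)

section Hypercube

/-- The graph of the `n`-dimensional hypercube: Hamming distance `1` is the adjacency in
`IsCLipschitz`. -/
def hypercubeGraph (n : ℕ) : SimpleGraph (Fin n → Bool) where
  Adj u v := hammingDist u v = 1
  symm := ⟨fun u v huv => by rwa [hammingDist_comm]⟩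
  loopless := ⟨by simp⟩

theorem hypercubeGraph_adj {n : ℕ} {u v : Fin n → Bool} :
    (hypercubeGraph n).Adj u v ↔ hammingDist u v = 1 := Iff.rfl

instance (n : ℕ) : DecidableRel (hypercubeGraph n).Adj :=
  fun u v => decEq (hammingDist u v) 1

theorem hypercubeGraph_isBipartite (n : ℕ) : (hypercubeGraph n).IsBipartite := by
  let parity (u : Fin n → Bool) : ZMod 2 := ∑ i, if u i then 1 else 0
  have parity_sub (u v : Fin n → Bool) : parity u - parity v = hammingDist u v := by
    rw [hammingDist, ← Finset.sum_boole, ← Finset.sum_sub_distrib]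
    refine Finset.sum_congr rfl fun i _ => ?_
    cases u i <;> cases v i <;> decide
  exact (SimpleGraph.Coloring.mk parity fun {u v} huv huv' => by
    simpa [huv', hypercubeGraph_adj.1 huv] using parity_sub u v).colorable

theorem hypercubeGraph_isRegularOfDegree (n : ℕ) : (hypercubeGraph n).IsRegularOfDegree n := by
  intro v
  rw [← SimpleGraph.card_neighborFinset_eq_degree]
  let difference (u : Fin n → Bool) : Finset (Fin n) := {i | v i ≠ u i}
  let flipOn (s : Finset (Fin n)) (i : Fin n) : Bool := xor (v i) (decide (i ∈ s))
  have flipOn_difference (u) : flipOn (difference u) = u := by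
    ext i
    cases hv : v i <;> cases hu : u i <;> simp [flipOn, difference, hv, hu]
  have difference_flipOn (s) : difference (flipOn s) = s := by
    ext i
    cases hv : v i <;> simp [flipOn, difference, hv]
  have mem_iff (u) : u ∈ (hypercubeGraph n).neighborFinset v ↔ (difference u).card = 1 := by
    rw [SimpleGraph.mem_neighborFinset, hypercubeGraph_adj]
    rfl
  calc ((hypercubeGraph n).neighborFinset v).card
      = (Finset.powersetCard 1 (Finset.univ : Finset (Fin n))).card :=
        Finset.card_nbij' difference flipOn (fun u hu => by simpa using (mem_iff u).1 hu)
          (fun s hs => (mem_iff _).2 (by simpa [difference_flipOn] using hs))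
          (fun u _ => flipOn_difference u) (fun s _ => difference_flipOn s)
    _ = n := by simp

theorem lipschitzCube_hypercubeGraph (n : ℕ) (c : ℝ) :
    lipschitzCube (hypercubeGraph n) c =
      {f | f ∈ unitCube (Fin n → Bool) ∧ IsCLipschitz n c f} := rfl

end Hypercube

/-- **Theorem.** For `c ∈ (0,1)`, the probability that a uniformly random function
`f : {0,1}^n → [0,1]` is `c`-Lipschitz is `c^{2^n + o(2^n)}`; that is,
`2^{-n} log p_n → log c`. -/
theorem probability_lipschitz (c : ℝ) (hc : c ∈ Set.Ioo (0:ℝ) 1) :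
    Tendsto (fun n : ℕ =>
      Real.log ((volume {f : (Fin n → Bool) → ℝ |
        f ∈ unitCube (Fin n → Bool) ∧ IsCLipschitz n c f}).toReal) / (2 : ℝ) ^ n)
      atTop (nhds (Real.log c)) := by
  simpa [lipschitzCube_hypercubeGraph] using probability_lipschitz_general tendsto_id
    hypercubeGraph_isRegularOfDegree hypercubeGraph_isBipartite hc.1 hc.2.le

end
end

section
/- Let M_n ⊆ [0,1]^{E(K_n)} be the metric polytope. Then vol(M_n) = (1/2)^{binom(n,2) + o(n²)}; that is, (−log vol(M_n))/binom(n,2) → log 2 as n → ∞. -/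
open MeasureTheory Filter Set

noncomputable section

/-- The edge set of the complete graph `K_n`, encoded as ordered pairs `(i,j)` with
`i < j`. -/
def EdgeType (n : ℕ) : Type := {p : Fin n × Fin n // p.1 < p.2}

instance (n : ℕ) : Fintype (EdgeType n) := Subtype.fintype _
instance (n : ℕ) : DecidableEq (EdgeType n) := Subtype.instDecidableEq

/-- The edge `{i,j}` for distinct `i j`. -/
def edgeOf {n : ℕ} (i j : Fin n) (h : i ≠ j) : EdgeType n :=
  if hij : i < j then ⟨(i, j), hij⟩ else ⟨(j, i), (not_lt.mp hij).lt_of_ne' h⟩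

/-- The value of an edge-decoration `d` on the unordered pair `{i,j}` (junk value `0`
if `i = j`). -/
def dval {n : ℕ} (d : EdgeType n → ℝ) (i j : Fin n) : ℝ :=
  if h : i = j then 0 else d (edgeOf i j h)

/-- The metric polytope `M_n ⊆ [0,1]^{E(K_n)}`: distances in `[0,1]` satisfying all
triangle inequalities. -/
def metricPolytope (n : ℕ) : Set (EdgeType n → ℝ) :=
  {d | (∀ e, d e ∈ Set.Icc (0:ℝ) 1) ∧
    ∀ i j k : Fin n, i ≠ j → j ≠ k → i ≠ k → dval d i j ≤ dval d i k + dval d k j}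

/-!
The cube `[1/2, 1]^E` lies in the metric polytope, which gives the lower bound on the volume. For
the upper bound, rounding down to multiples of `1/k` covers the polytope by cubes indexed by the
integer labellings of the edges that satisfy the triangle inequalities up to `1`, and these are
counted by the entropy method.

Let `h_s` be the entropy of the label of an edge of a uniformly random such labelling, given the
labels of all edges meeting `s` fixed vertices; by symmetry the choices of edge and vertices do not
matter. As `h_s` decreases in `s` and is bounded, `h_s - h_(s+1)` is small for some bounded `s`.
Since `h_(s+1)` is a lower bound for the entropy of one edge of a triangle given also its two other
edges, the three edges of a triangle are then nearly independent given the `s` stars. Exactly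
independent labels are supported on a box inside the set of near-triangles, and the sides of such a
box have about half of the possible labels on average; by compactness, nearly independent labels
have at most slightly more entropy. Hence `h_s` is at most about `log (k/2)`, and all but `O(n)` of
the edges contribute at most `h_s` to the logarithm of the number of labellings.
-/

section Preliminaries

lemma exists_sub_succ_le_div {h : ℕ → ℝ} {M : ℝ} {m : ℕ} (hm : 0 < m) (h0 : h 0 ≤ M)
    (hpos : 0 ≤ h m) : ∃ s < m, h s - h (s + 1) ≤ M / m := by
  simp only [← Finset.mem_range]
  refine Finset.exists_le_of_sum_le (Finset.nonempty_range_iff.2 hm.ne') ?_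
  rw [Finset.sum_range_sub', Finset.sum_const, Finset.card_range, nsmul_eq_mul,
    mul_div_cancel₀ _ (by positivity)]
  linarith

lemma eventually_mul_le_mul_choose_two (c : ℝ) {δ : ℝ} (hδ : 0 < δ) :
    ∀ᶠ n : ℕ in atTop, c * n ≤ δ * n.choose 2 := by
  filter_upwards [tendsto_natCast_atTop_atTop.eventually_ge_atTop (2 * c / δ + 1)] with n hn
  have hc : 2 * c ≤ (n - 1) * δ := by rwa [← div_le_iff₀ hδ, le_sub_iff_add_le]
  rw [Nat.cast_choose_two]
  linarith [mul_le_mul_of_nonneg_right hc n.cast_nonneg]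

lemma exists_perm_image_eq_and_apply_eq {α : Type*} [DecidableEq α] {V V' : Finset α}
    (hV : V.card = V'.card) {i j i' j' : α} (hij : i ≠ j) (hij' : i' ≠ j')
    (hi : i ∉ V) (hj : j ∉ V) (hi' : i' ∉ V') (hj' : j' ∉ V') :
    ∃ τ : Equiv.Perm α, V.image τ = V' ∧ τ i = i' ∧ τ j = j' := by
  obtain ⟨τ, hτ⟩ := Equiv.Perm.exists_extending_pair (α := V ⊕ Fin 2)
    (Sum.elim Subtype.val ![i, j]) (Sum.elim (Subtype.val ∘ V.equivOfCardEq hV) ![i', j'])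
    (Subtype.val_injective.sumElim (by simpa [Function.Injective, Fin.forall_fin_two, hij.symm])
      fun v => Fin.forall_fin_two.2
        ⟨fun h : v.1 = i => hi (h ▸ v.2), fun h : v.1 = j => hj (h ▸ v.2)⟩)
    ((Subtype.val_injective.comp (Equiv.injective _)).sumElim
      (by simpa [Function.Injective, Fin.forall_fin_two, hij'.symm])
      fun v => Fin.forall_fin_two.2
        ⟨fun h : (V.equivOfCardEq hV v).1 = i' => hi' (h ▸ (V.equivOfCardEq hV v).2),
          fun h : (V.equivOfCardEq hV v).1 = j' => hj' (h ▸ (V.equivOfCardEq hV v).2)⟩)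
  refine ⟨τ, Finset.eq_of_subset_of_card_le (Finset.image_subset_iff.2 fun v hv => ?_) ?_,
    hτ (.inr 0), hτ (.inr 1)⟩
  · exact (hτ (.inl ⟨v, hv⟩)).symm ▸ (V.equivOfCardEq hV ⟨v, hv⟩).2
  · rw [Finset.card_image_of_injective _ τ.injective, hV]

lemma volume_pi_Icc_add {ι : Type*} [Fintype ι] (a : ι → ℝ) (r : ℝ) :
    volume (Set.univ.pi fun i => Icc (a i) (a i + r)) = ENNReal.ofReal r ^ Fintype.card ι := by
  rw [volume_pi_pi]
  simp

end Preliminaries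

section Entropy

open scoped BigOperators

variable {ι ι' α β γ δ : Type*}

open Classical in
/-- The probability that `X = x` when the argument of `X` is drawn uniformly from `Ω`. -/
def uniformProb (Ω : Finset ι) (X : ι → α) (x : α) : ℝ :=
  (Ω.filter (X · = x)).card / Ω.card

/-- The Shannon entropy (in nats) of the random variable `X` on the finite set `Ω` with its
uniform distribution, as the mean of `-log ℙ(X = x)`; it is `0` if `Ω` is empty. -/
def entropy (Ω : Finset ι) (X : ι → α) : ℝ :=
  𝔼 ω ∈ Ω, -Real.log (uniformProb Ω X (X ω))

open Classical in
/-- The set of outcomes in `Ω` at which `G` takes the same value as at `ω`. -/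
def fiberAt (Ω : Finset ι) (G : ι → γ) (ω : ι) : Finset ι :=
  Ω.filter (G · = G ω)

/-- The Shannon conditional entropy of `X` given `G` on the uniform space `Ω`: conditioning on the
value of `G` gives the uniform distribution on a fibre of `G`. -/
def condEntropy (Ω : Finset ι) (X : ι → α) (G : ι → γ) : ℝ :=
  𝔼 ω ∈ Ω, entropy (fiberAt Ω G ω) X

lemma mem_fiberAt {Ω : Finset ι} {G : ι → γ} {ω ω' : ι} :
    ω' ∈ fiberAt Ω G ω ↔ ω' ∈ Ω ∧ G ω' = G ω := by
  classical exact Finset.mem_filter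

lemma self_mem_fiberAt {Ω : Finset ι} (G : ι → γ) {ω : ι} (hω : ω ∈ Ω) : ω ∈ fiberAt Ω G ω :=
  mem_fiberAt.2 ⟨hω, rfl⟩

lemma fiberAt_congr {Ω : Finset ι} {G : ι → γ} {H : ι → δ} {ω : ι}
    (h : ∀ ω' ∈ Ω, G ω' = G ω ↔ H ω' = H ω) : fiberAt Ω G ω = fiberAt Ω H ω := by
  classical exact Finset.filter_congr h

lemma fiberAt_eq_of_eq (Ω : Finset ι) {G : ι → γ} {ω ω' : ι} (h : G ω' = G ω) :
    fiberAt Ω G ω' = fiberAt Ω G ω := by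
  ext
  simp only [mem_fiberAt, h]

lemma uniformProb_self (Ω : Finset ι) (X : ι → α) (ω : ι) :
    uniformProb Ω X (X ω) = (fiberAt Ω X ω).card / Ω.card :=
  rfl

lemma uniformProb_nonneg (Ω : Finset ι) (X : ι → α) (x : α) : 0 ≤ uniformProb Ω X x := by
  unfold uniformProb
  positivity

lemma uniformProb_self_pos {Ω : Finset ι} (X : ι → α) {ω : ι} (hω : ω ∈ Ω) :
    0 < uniformProb Ω X (X ω) := by
  have hΩ : 0 < Ω.card := Finset.card_pos.2 ⟨ω, hω⟩
  have hfib : 0 < (fiberAt Ω X ω).card := Finset.card_pos.2 ⟨ω, self_mem_fiberAt X hω⟩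
  rw [uniformProb_self]
  positivity

lemma expect_comp_eq_sum_uniformProb_mul {Ω : Finset ι} {X : ι → α} {A : Finset α}
    (hA : ∀ ω ∈ Ω, X ω ∈ A) (φ : α → ℝ) :
    𝔼 ω ∈ Ω, φ (X ω) = ∑ x ∈ A, uniformProb Ω X x * φ x := by
  classical
  rw [Finset.expect_eq_sum_div_card, ← Finset.sum_fiberwise_of_maps_to hA, Finset.sum_div]
  refine Finset.sum_congr rfl fun x _ => ?_
  rw [Finset.sum_congr rfl fun ω hω => congrArg φ (Finset.mem_filter.1 hω).2, Finset.sum_const,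
    nsmul_eq_mul, uniformProb, div_mul_eq_mul_div]

lemma sum_uniformProb_eq_one {Ω : Finset ι} (hΩ : Ω.Nonempty) {X : ι → α} {A : Finset α}
    (hA : ∀ ω ∈ Ω, X ω ∈ A) : ∑ x ∈ A, uniformProb Ω X x = 1 := by
  simpa [hΩ] using (expect_comp_eq_sum_uniformProb_mul hA fun _ => (1 : ℝ)).symm

lemma uniformProb_mem_stdSimplex [Fintype α] {Ω : Finset ι} (hΩ : Ω.Nonempty) (X : ι → α) :
    uniformProb Ω X ∈ stdSimplex ℝ α :=
  ⟨uniformProb_nonneg Ω X, sum_uniformProb_eq_one hΩ fun _ _ => Finset.mem_univ _⟩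

lemma entropy_eq_sum_negMulLog {Ω : Finset ι} {X : ι → α} {A : Finset α}
    (hA : ∀ ω ∈ Ω, X ω ∈ A) :
    entropy Ω X = ∑ x ∈ A, Real.negMulLog (uniformProb Ω X x) := by
  simp only [entropy, expect_comp_eq_sum_uniformProb_mul hA fun x => -Real.log (uniformProb Ω X x),
    Real.negMulLog, mul_neg, neg_mul]

lemma sum_negMulLog_le_log_card {A : Finset α} {a : α → ℝ} (h0 : ∀ x ∈ A, 0 ≤ a x)
    (h1 : ∑ x ∈ A, a x = 1) : ∑ x ∈ A, Real.negMulLog (a x) ≤ Real.log A.card := by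
  have hA : A.Nonempty := Finset.nonempty_of_sum_ne_zero (by rw [h1]; exact one_ne_zero)
  have hcard : (0 : ℝ) < A.card := by exact_mod_cast hA.card_pos
  have jensen := Real.concaveOn_negMulLog.le_map_sum (t := A) (w := fun _ => (A.card : ℝ)⁻¹)
    (p := a) (fun _ _ => by positivity) (by simp [hcard.ne']) h0
  simp only [smul_eq_mul, ← Finset.mul_sum, h1, mul_one, Real.negMulLog, Real.log_inv] at jensen ⊢
  rw [neg_mul_neg] at jensen
  exact le_of_mul_le_mul_left jensen (by positivity)

lemma entropy_nonneg (Ω : Finset ι) (X : ι → α) : 0 ≤ entropy Ω X := by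
  refine Finset.expect_nonneg fun ω _ => neg_nonneg.2 ?_
  refine Real.log_nonpos (uniformProb_nonneg _ _ _) ?_
  classical exact div_le_one_of_le₀ (by exact_mod_cast Finset.card_filter_le _ _) (by positivity)

lemma entropy_le_log_card {Ω : Finset ι} {X : ι → α} {A : Finset α} (hA : ∀ ω ∈ Ω, X ω ∈ A) :
    entropy Ω X ≤ Real.log A.card := by
  rcases Ω.eq_empty_or_nonempty with rfl | hΩ
  · simpa [entropy] using Real.log_natCast_nonneg A.card
  · rw [entropy_eq_sum_negMulLog hA]
    exact sum_negMulLog_le_log_card (fun x _ => uniformProb_nonneg Ω X x)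
      (sum_uniformProb_eq_one hΩ hA)

lemma entropy_congr {Ω : Finset ι} {X : ι → α} {Y : ι → β}
    (h : ∀ ω ∈ Ω, ∀ ω' ∈ Ω, X ω' = X ω ↔ Y ω' = Y ω) : entropy Ω X = entropy Ω Y := by
  refine Finset.expect_congr rfl fun ω hω => ?_
  rw [uniformProb_self, uniformProb_self, fiberAt_congr (h ω hω)]

lemma entropy_of_injOn {Ω : Finset ι} {X : ι → α} (hΩ : Ω.Nonempty) (hX : Set.InjOn X Ω) :
    entropy Ω X = Real.log Ω.card := by
  have hfib : ∀ ω ∈ Ω, fiberAt Ω X ω = {ω} := fun ω hω => by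
    ext ω'
    rw [mem_fiberAt, Finset.mem_singleton]
    exact ⟨fun h => hX h.1 hω h.2, by rintro rfl; exact ⟨hω, rfl⟩⟩
  have hlog : ∀ ω ∈ Ω, -Real.log (uniformProb Ω X (X ω)) = Real.log Ω.card := fun ω hω => by
    rw [uniformProb_self, hfib ω hω, Finset.card_singleton, Nat.cast_one, one_div, Real.log_inv,
      neg_neg]
  rw [entropy, Finset.expect_congr rfl hlog, Finset.expect_const hΩ]

lemma fiberAt_map (σ : ι ↪ ι') (Ω : Finset ι) (G : ι' → γ) (ω : ι) :
    fiberAt (Ω.map σ) G (σ ω) = (fiberAt Ω (G ∘ σ) ω).map σ := by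
  classical exact Finset.filter_map

lemma entropy_map (σ : ι ↪ ι') (Ω : Finset ι) (X : ι' → α) :
    entropy (Ω.map σ) X = entropy Ω (X ∘ σ) := by
  refine (Finset.expect_nbij σ (fun ω hω => Finset.mem_map_of_mem σ hω) (fun ω _ => ?_)
    σ.injective.injOn ?_).symm
  · rw [uniformProb_self, uniformProb_self, fiberAt_map, Finset.card_map, Finset.card_map]
  · rw [Finset.coe_map]
    exact Set.surjOn_image _ _

/-- Gibbs' inequality; for a probability density `q`, the term `∑ q - 1` is minus the mass of `q`
outside `A`. -/
lemma entropy_le_expect_neg_log_add {Ω : Finset ι} (hΩ : Ω.Nonempty) {X : ι → α} {A : Finset α}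
    (hA : ∀ ω ∈ Ω, X ω ∈ A) {q : α → ℝ} (hq : ∀ x ∈ A, 0 ≤ q x) (hqX : ∀ ω ∈ Ω, 0 < q (X ω)) :
    entropy Ω X ≤ 𝔼 ω ∈ Ω, -Real.log (q (X ω)) + (∑ x ∈ A, q x - 1) := by
  have hlog : ∀ ω ∈ Ω, -Real.log (uniformProb Ω X (X ω)) ≤
      -Real.log (q (X ω)) + (q (X ω) / uniformProb Ω X (X ω) - 1) := fun ω hω => by
    have hp := uniformProb_self_pos X hω
    have := Real.log_le_sub_one_of_pos (div_pos (hqX ω hω) hp)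
    rw [Real.log_div (hqX ω hω).ne' hp.ne'] at this
    linarith
  have hratio : 𝔼 ω ∈ Ω, q (X ω) / uniformProb Ω X (X ω) ≤ ∑ x ∈ A, q x := by
    rw [expect_comp_eq_sum_uniformProb_mul hA fun x => q x / uniformProb Ω X x]
    refine Finset.sum_le_sum fun x hx => ?_
    rcases eq_or_ne (uniformProb Ω X x) 0 with h | h
    · simpa [h] using hq x hx
    · rw [mul_div_cancel₀ _ h]
  refine (Finset.expect_le_expect hlog).trans ?_
  rw [Finset.expect_add_distrib, Finset.expect_sub_distrib, Finset.expect_const hΩ]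
  linarith

lemma entropy_prod_le (Ω : Finset ι) (X : ι → α) (Y : ι → β) :
    entropy Ω (fun ω => (X ω, Y ω)) ≤ entropy Ω X + entropy Ω Y := by
  classical
  rcases Ω.eq_empty_or_nonempty with rfl | hΩ
  · simp [entropy]
  have gibbs := entropy_le_expect_neg_log_add hΩ (X := fun ω => (X ω, Y ω))
    (A := Ω.image X ×ˢ Ω.image Y) (q := fun v => uniformProb Ω X v.1 * uniformProb Ω Y v.2)
    (fun _ hω =>
      Finset.mk_mem_product (Finset.mem_image_of_mem X hω) (Finset.mem_image_of_mem Y hω))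
    (fun v _ => mul_nonneg (uniformProb_nonneg _ _ _) (uniformProb_nonneg _ _ _))
    (fun ω hω => mul_pos (uniformProb_self_pos X hω) (uniformProb_self_pos Y hω))
  rw [Finset.sum_product, ← Finset.sum_mul_sum,
    sum_uniformProb_eq_one hΩ fun _ => Finset.mem_image_of_mem X,
    sum_uniformProb_eq_one hΩ fun _ => Finset.mem_image_of_mem Y,
    mul_one, sub_self, add_zero] at gibbs
  refine gibbs.trans_eq ?_
  rw [entropy, entropy, ← Finset.expect_add_distrib]
  refine Finset.expect_congr rfl fun ω hω => ?_
  rw [Real.log_mul (uniformProb_self_pos X hω).ne' (uniformProb_self_pos Y hω).ne', neg_add]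

lemma expect_expect_fiberAt (Ω : Finset ι) (G : ι → γ) (f : ι → ℝ) :
    𝔼 ω ∈ Ω, 𝔼 ω' ∈ fiberAt Ω G ω, f ω' = 𝔼 ω ∈ Ω, f ω := by
  rw [Finset.expect_eq_sum_div_card, Finset.expect_eq_sum_div_card]
  congr 1
  calc ∑ ω ∈ Ω, 𝔼 ω' ∈ fiberAt Ω G ω, f ω'
      = ∑ ω ∈ Ω, ∑ ω' ∈ fiberAt Ω G ω, f ω' / (fiberAt Ω G ω').card := by
        refine Finset.sum_congr rfl fun ω _ => ?_
        rw [Finset.expect_eq_sum_div_card, Finset.sum_div]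
        refine Finset.sum_congr rfl fun ω' hω' => ?_
        rw [fiberAt_eq_of_eq Ω (mem_fiberAt.1 hω').2]
    _ = ∑ ω' ∈ Ω, ∑ _ω ∈ fiberAt Ω G ω', f ω' / (fiberAt Ω G ω').card :=
        Finset.sum_comm' fun ω ω' => by simp only [mem_fiberAt]; tauto
    _ = ∑ ω ∈ Ω, f ω := by
        refine Finset.sum_congr rfl fun ω hω => ?_
        have hcard := Finset.card_ne_zero_of_mem (self_mem_fiberAt G hω)
        rw [Finset.sum_const, nsmul_eq_mul, mul_div_cancel₀ _ (Nat.cast_ne_zero.2 hcard)]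

lemma entropy_prod_eq_add_condEntropy (Ω : Finset ι) (G : ι → γ) (X : ι → α) :
    entropy Ω (fun ω => (G ω, X ω)) = entropy Ω G + condEntropy Ω X G := by
  have hcond : condEntropy Ω X G = 𝔼 ω ∈ Ω, -Real.log (uniformProb (fiberAt Ω G ω) X (X ω)) := by
    refine Eq.trans ?_ (expect_expect_fiberAt Ω G _)
    refine Finset.expect_congr rfl fun ω _ => Finset.expect_congr rfl fun ω' hω' => ?_
    rw [fiberAt_eq_of_eq Ω (mem_fiberAt.1 hω').2]
  rw [hcond, entropy, entropy, ← Finset.expect_add_distrib]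
  refine Finset.expect_congr rfl fun ω hω => ?_
  have hfib : fiberAt Ω (fun ω => (G ω, X ω)) ω = fiberAt (fiberAt Ω G ω) X ω := by
    ext ω'
    simp only [mem_fiberAt, Prod.mk.injEq, and_assoc]
  have hG : (0 : ℝ) < (fiberAt Ω G ω).card := by
    exact_mod_cast Finset.card_pos.2 ⟨ω, self_mem_fiberAt G hω⟩
  have hprod : uniformProb Ω (fun ω => (G ω, X ω)) (G ω, X ω) =
      uniformProb Ω G (G ω) * uniformProb (fiberAt Ω G ω) X (X ω) := by
    rw [uniformProb_self Ω (fun ω => (G ω, X ω)), uniformProb_self, uniformProb_self, hfib]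
    field_simp
  rw [hprod, Real.log_mul (uniformProb_self_pos G hω).ne'
    (uniformProb_self_pos X (self_mem_fiberAt G hω)).ne', neg_add]

lemma condEntropy_nonneg (Ω : Finset ι) (X : ι → α) (G : ι → γ) : 0 ≤ condEntropy Ω X G :=
  Finset.expect_nonneg fun _ _ => entropy_nonneg _ _

lemma condEntropy_le_log_card [Fintype α] (Ω : Finset ι) (X : ι → α) (G : ι → γ) :
    condEntropy Ω X G ≤ Real.log (Fintype.card α) := by
  rcases Ω.eq_empty_or_nonempty with rfl | hΩ
  · simpa [condEntropy] using Real.log_natCast_nonneg (Fintype.card α)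
  · exact Finset.expect_le hΩ fun ω _ => entropy_le_log_card fun _ _ => Finset.mem_univ _

lemma condEntropy_congr {Ω : Finset ι} {X : ι → α} {Y : ι → β} {G : ι → γ} {H : ι → δ}
    (hXY : ∀ ω ∈ Ω, ∀ ω' ∈ Ω, X ω' = X ω ↔ Y ω' = Y ω)
    (hGH : ∀ ω ∈ Ω, ∀ ω' ∈ Ω, G ω' = G ω ↔ H ω' = H ω) :
    condEntropy Ω X G = condEntropy Ω Y H := by
  refine Finset.expect_congr rfl fun ω hω => ?_
  rw [fiberAt_congr (hGH ω hω)]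
  exact entropy_congr fun _ hω₁ _ hω₂ => hXY _ (mem_fiberAt.1 hω₁).1 _ (mem_fiberAt.1 hω₂).1

lemma condEntropy_map (σ : ι ↪ ι') (Ω : Finset ι) (X : ι' → α) (G : ι' → γ) :
    condEntropy (Ω.map σ) X G = condEntropy Ω (X ∘ σ) (G ∘ σ) := by
  refine (Finset.expect_nbij σ (fun ω hω => Finset.mem_map_of_mem σ hω) (fun ω _ => ?_)
    σ.injective.injOn ?_).symm
  · rw [fiberAt_map, entropy_map]
  · rw [Finset.coe_map]
    exact Set.surjOn_image _ _

lemma condEntropy_prod_le (Ω : Finset ι) (X : ι → α) (Y : ι → β) (G : ι → γ) :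
    condEntropy Ω (fun ω => (X ω, Y ω)) G ≤ condEntropy Ω X G + condEntropy Ω Y G := by
  rw [condEntropy, condEntropy, condEntropy, ← Finset.expect_add_distrib]
  exact Finset.expect_le_expect fun ω _ => entropy_prod_le _ X Y

lemma condEntropy_anti {Ω : Finset ι} (X : ι → α) {G : ι → γ} {H : ι → δ}
    (h : ∀ ω ∈ Ω, ∀ ω' ∈ Ω, H ω' = H ω → G ω' = G ω) :
    condEntropy Ω X H ≤ condEntropy Ω X G := by
  have hXH := condEntropy_prod_le Ω X H G
  have chain₁ := entropy_prod_eq_add_condEntropy Ω G (fun ω => (X ω, H ω))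
  have chain₂ := entropy_prod_eq_add_condEntropy Ω G H
  have chain₃ := entropy_prod_eq_add_condEntropy Ω H X
  have eq₁ : entropy Ω (fun ω => (G ω, X ω, H ω)) = entropy Ω (fun ω => (H ω, X ω)) :=
    entropy_congr fun ω hω ω' hω' => by
      simp only [Prod.mk.injEq]
      exact ⟨fun ⟨_, hX, hH⟩ => ⟨hH, hX⟩, fun ⟨hH, hX⟩ => ⟨h ω hω ω' hω' hH, hX, hH⟩⟩
  have eq₂ : entropy Ω (fun ω => (G ω, H ω)) = entropy Ω H :=
    entropy_congr fun ω hω ω' hω' => by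
      simp only [Prod.mk.injEq]
      exact ⟨And.right, fun hH => ⟨h ω hω ω' hω' hH, hH⟩⟩
  linarith

end Entropy

section NearIndependence

open scoped BigOperators

lemma exists_forall_le_add_mul_of_isCompact {X : Type*} [TopologicalSpace X] {K : Set X}
    (hK : IsCompact K) {f g : X → ℝ} (hf : ContinuousOn f K) (hg : ContinuousOn g K)
    (hg0 : ∀ x ∈ K, 0 ≤ g x) {L ε : ℝ} (hε : 0 < ε) (hfg : ∀ x ∈ K, g x = 0 → f x ≤ L) :
    ∃ C, 0 ≤ C ∧ ∀ x ∈ K, f x ≤ L + ε + C * g x := by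
  obtain ⟨M, hM⟩ := hK.bddAbove_image hf
  obtain ⟨m, hm0, hm⟩ := hK.exists_forall_le' (f := fun x => max (g x) (L + ε - f x))
    (hg.sup (continuousOn_const.sub hf)) (a := 0) fun x hx => by
      rcases (hg0 x hx).eq_or_lt with h | h
      · exact lt_max_of_lt_right (by linarith [hfg x hx h.symm])
      · exact lt_max_of_lt_left h
  refine ⟨max (M - L) 0 / m, by positivity, fun x hx => ?_⟩
  have hCg : 0 ≤ max (M - L) 0 / m * g x := mul_nonneg (by positivity) (hg0 x hx)
  rcases le_max_iff.1 (hm x hx) with h | h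
  · have hfM : f x ≤ M := hM (mem_image_of_mem f hx)
    have hM' : max (M - L) 0 ≤ max (M - L) 0 / m * g x := by
      rw [div_mul_eq_mul_div, le_div_iff₀ hm0]
      exact mul_le_mul_of_nonneg_left h (le_max_right _ _)
    linarith [le_max_left (M - L) 0]
  · linarith

variable {κ α : Type*} [Fintype κ] [DecidableEq κ]

/-- The finite set `T` of families contains no large box: whenever a product of nonempty sets
`A i` lies in `T`, the sum of the `log #(A i)` is at most `L`. -/
def BoxLogCardLE (T : Finset (κ → α)) (L : ℝ) : Prop :=
  ∀ A : κ → Finset α, (∀ i, (A i).Nonempty) → Fintype.piFinset A ⊆ T →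
    ∑ i, Real.log (A i).card ≤ L

lemma BoxLogCardLE.sum_negMulLog_le [Fintype α] {T : Finset (κ → α)} {L : ℝ} (hT : BoxLogCardLE T L)
    {a : κ → α → ℝ} (ha : ∀ i, a i ∈ stdSimplex ℝ α) (ha0 : ∀ x ∉ T, ∏ i, a i (x i) = 0) :
    ∑ i, ∑ x, Real.negMulLog (a i x) ≤ L := by
  classical
  set A : κ → Finset α := fun i => {x | a i x ≠ 0} with hA
  have hsum : ∀ i, ∑ x ∈ A i, a i x = 1 := fun i => by
    rw [hA, Finset.sum_filter_ne_zero, (ha i).2]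
  have hbox : Fintype.piFinset A ⊆ T := fun x hx => by
    by_contra hxT
    obtain ⟨i, -, hi⟩ := Finset.prod_eq_zero_iff.1 (ha0 x hxT)
    exact (Finset.mem_filter.1 (Fintype.mem_piFinset.1 hx i)).2 hi
  refine (Finset.sum_le_sum fun i _ => ?_).trans (hT A (fun i => ?_) hbox)
  · rw [← Finset.sum_subset (Finset.subset_univ (A i)) fun x _ hx => ?_]
    · exact sum_negMulLog_le_log_card (fun x _ => (ha i).1 x) (hsum i)
    · rw [show a i x = 0 by simpa [hA] using hx, Real.negMulLog_zero]
  · exact Finset.nonempty_of_sum_ne_zero (by rw [hsum i]; exact one_ne_zero)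

lemma BoxLogCardLE.exists_sum_negMulLog_le [Fintype α] [DecidableEq α] {T : Finset (κ → α)}
    {L ε : ℝ} (hT : BoxLogCardLE T L) (hε : 0 < ε) :
    ∃ C, 0 ≤ C ∧ ∀ a : κ → α → ℝ, (∀ i, a i ∈ stdSimplex ℝ α) →
      ∑ i, ∑ x, Real.negMulLog (a i x) ≤ L + ε + C * ∑ x ∈ Tᶜ, ∏ i, a i (x i) := by
  have hprod : ∀ a ∈ Set.univ.pi fun _ : κ => stdSimplex ℝ α, ∀ x : κ → α,
      0 ≤ ∏ i, a i (x i) :=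
    fun a ha x => Finset.prod_nonneg fun i _ => (ha i (mem_univ i)).1 (x i)
  obtain ⟨C, hC0, hC⟩ := exists_forall_le_add_mul_of_isCompact
    (isCompact_univ_pi fun _ : κ => isCompact_stdSimplex ℝ α)
    (f := fun a => ∑ i, ∑ x, Real.negMulLog (a i x))
    (g := fun a => ∑ x ∈ Tᶜ, ∏ i, a i (x i))
    (continuous_finsetSum _ fun i _ => continuous_finsetSum _ fun x _ =>
      Real.continuous_negMulLog.comp (by fun_prop)).continuousOn
    (by fun_prop) (fun a ha => Finset.sum_nonneg fun x _ => hprod a ha x) hε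
    (fun a ha h => hT.sum_negMulLog_le (fun i => ha i (mem_univ i)) fun x hx =>
      (Finset.sum_eq_zero_iff_of_nonneg fun x _ => hprod a ha x).1 h x (Finset.mem_compl.2 hx))
  exact ⟨C, hC0, fun a ha => hC a fun i _ => ha i⟩

lemma sum_compl_prod_uniformProb_le [Fintype α] [DecidableEq α] {ι : Type*} {Ω : Finset ι}
    (hΩ : Ω.Nonempty) {X : ι → κ → α} {T : Finset (κ → α)} (hX : ∀ ω ∈ Ω, X ω ∈ T) :
    ∑ x ∈ Tᶜ, ∏ i, uniformProb Ω (X · i) (x i) ≤ ∑ i, entropy Ω (X · i) - entropy Ω X := by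
  set q : (κ → α) → ℝ := fun x => ∏ i, uniformProb Ω (X · i) (x i) with hq
  have gibbs := entropy_le_expect_neg_log_add hΩ hX (q := q)
    (fun x _ => Finset.prod_nonneg fun i _ => uniformProb_nonneg _ _ _)
    (fun ω hω => Finset.prod_pos fun i _ => uniformProb_self_pos (X · i) hω)
  have hmass : ∑ x, q x = 1 := by
    rw [hq, ← Fintype.piFinset_univ, ← Finset.prod_univ_sum]
    exact Finset.prod_eq_one fun i _ => (uniformProb_mem_stdSimplex hΩ (X · i)).2
  have hlog : 𝔼 ω ∈ Ω, -Real.log (q (X ω)) = ∑ i, entropy Ω (X · i) := by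
    simp only [entropy, ← Finset.expect_sum_comm]
    refine Finset.expect_congr rfl fun ω hω => ?_
    rw [Real.log_prod fun i _ => (uniformProb_self_pos (X · i) hω).ne', Finset.sum_neg_distrib]
  linarith [Finset.sum_add_sum_compl T q]

/-- The factor of `C` is nonnegative and measures how far the variables `X · i` are from being
independent given `G`. -/
lemma BoxLogCardLE.exists_sum_condEntropy_le [Finite α] {T : Finset (κ → α)} {L ε : ℝ}
    (hT : BoxLogCardLE T L) (hε : 0 < ε) :
    ∃ C, 0 ≤ C ∧ ∀ {ι γ : Type*} {Ω : Finset ι} (X : ι → κ → α) (G : ι → γ),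
      Ω.Nonempty → (∀ ω ∈ Ω, X ω ∈ T) → ∑ i, condEntropy Ω (X · i) G ≤
      L + ε + C * (∑ i, condEntropy Ω (X · i) G - condEntropy Ω X G) := by
  classical
  cases nonempty_fintype α
  obtain ⟨C, hC0, hC⟩ := hT.exists_sum_negMulLog_le hε
  refine ⟨C, hC0, fun {ι γ Ω} X G hΩ hX => ?_⟩
  have hfib : ∀ ω ∈ Ω, ∑ i, entropy (fiberAt Ω G ω) (X · i) ≤ L + ε + C *
      (∑ i, entropy (fiberAt Ω G ω) (X · i) - entropy (fiberAt Ω G ω) X) := fun ω hω => by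
    have hne : (fiberAt Ω G ω).Nonempty := ⟨ω, self_mem_fiberAt G hω⟩
    have hle := hC _ fun i => uniformProb_mem_stdSimplex hne (X · i)
    simp only [← entropy_eq_sum_negMulLog fun _ _ => Finset.mem_univ _] at hle
    refine hle.trans (add_le_add_right (mul_le_mul_of_nonneg_left ?_ hC0) _)
    exact sum_compl_prod_uniformProb_le hne fun ω' hω' => hX ω' (mem_fiberAt.1 hω').1
  calc ∑ i, condEntropy Ω (X · i) G = 𝔼 ω ∈ Ω, ∑ i, entropy (fiberAt Ω G ω) (X · i) :=
        (Finset.expect_sum_comm _ _ _).symm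
    _ ≤ 𝔼 ω ∈ Ω, (L + ε + C *
        (∑ i, entropy (fiberAt Ω G ω) (X · i) - entropy (fiberAt Ω G ω) X)) :=
        Finset.expect_le_expect hfib
    _ = _ := by
        rw [Finset.expect_add_distrib, Finset.expect_const hΩ, ← Finset.mul_expect,
          Finset.expect_sub_distrib, Finset.expect_sum_comm]
        rfl

end NearIndependence

section NearTriangle

/-- The triples of integers in `[0, K)` satisfying the three triangle inequalities up to an error
of `1`, the error that rounding down the sides of a triangle can cause. -/
def nearTriangle (K : ℕ) : Finset (Fin 3 → Fin K) :=
  {x | ∀ i, (x i : ℕ) ≤ x (i + 1) + x (i + 2) + 1}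

lemma mem_nearTriangle {K : ℕ} {x : Fin 3 → Fin K} :
    x ∈ nearTriangle K ↔ ∀ i, (x i : ℕ) ≤ x (i + 1) + x (i + 2) + 1 := by
  simp [nearTriangle]

lemma card_add_min'_le_max'_add_one {K : ℕ} (A : Finset (Fin K)) (hA : A.Nonempty) :
    A.card + A.min' hA ≤ A.max' hA + 1 := by
  have hcard : A.card ≤ (Finset.Icc (A.min' hA) (A.max' hA)).card :=
    Finset.card_le_card fun x hx => Finset.mem_Icc.2 ⟨A.min'_le x hx, A.le_max' x hx⟩
  have hle : (A.min' hA : ℕ) ≤ A.max' hA := A.min'_le _ (A.max'_mem hA)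
  rw [Fin.card_Icc] at hcard
  omega

lemma two_mul_sum_card_le_of_piFinset_subset_nearTriangle {K : ℕ} {A : Fin 3 → Finset (Fin K)}
    (hA : ∀ i, (A i).Nonempty) (hbox : Fintype.piFinset A ⊆ nearTriangle K) :
    2 * ∑ i, (A i).card ≤ 3 * (K + 2) := by
  -- Test the box at the point with one side as long and the other two as short as possible.
  have hmax : ∀ i, ((A i).max' (hA i) : ℕ) ≤
      (A (i + 1)).min' (hA _) + (A (i + 2)).min' (hA _) + 1 := fun i => by
    have hmem : Function.update (fun j => (A j).min' (hA j)) i ((A i).max' (hA i)) ∈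
        Fintype.piFinset A := Fintype.mem_piFinset.2 fun j => by
      rcases eq_or_ne j i with rfl | hj
      · simpa using (A j).max'_mem (hA j)
      · simpa [hj] using (A j).min'_mem (hA j)
    simpa using mem_nearTriangle.1 (hbox hmem) i
  have hcard := fun i => card_add_min'_le_max'_add_one (A i) (hA i)
  have hlt := fun i => Nat.succ_le_of_lt ((A i).max' (hA i)).isLt
  have h₀ := hmax 0
  have h₁ := hmax 1
  have h₂ := hmax 2
  simp only [Fin.isValue, Fin.reduceAdd] at h₀ h₁ h₂
  rw [Fin.sum_univ_three]
  linarith [hcard 0, hcard 1, hcard 2, hlt 0, hlt 1, hlt 2]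

lemma boxLogCardLE_nearTriangle (K : ℕ) :
    BoxLogCardLE (nearTriangle K) (3 * Real.log ((K + 2) / 2)) := by
  intro A hA hbox
  have hsum : 2 * ∑ i, ((A i).card : ℝ) ≤ 3 * (K + 2) := by
    exact_mod_cast two_mul_sum_card_le_of_piFinset_subset_nearTriangle hA hbox
  set m : ℝ := (K + 2) / 2 with hm
  have hm0 : 0 < m := by positivity
  have htangent : ∀ i, Real.log (A i).card ≤ Real.log m + ((A i).card / m - 1) := fun i => by
    have hcard : (0 : ℝ) < (A i).card := by exact_mod_cast (hA i).card_pos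
    have := Real.log_le_sub_one_of_pos (div_pos hcard hm0)
    rw [Real.log_div hcard.ne' hm0.ne'] at this
    linarith
  have hmean : (∑ i, ((A i).card : ℝ)) / m ≤ 3 := by
    rw [div_le_iff₀ hm0]
    linarith
  calc ∑ i, Real.log (A i).card ≤ ∑ i, (Real.log m + ((A i).card / m - 1)) :=
        Finset.sum_le_sum fun i _ => htangent i
    _ = 3 * Real.log m + ((∑ i, ((A i).card : ℝ)) / m - 3) := by
        simp [Finset.sum_add_distrib, Finset.sum_div]
    _ ≤ 3 * Real.log m := by linarith

end NearTriangle

section Coordinates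

variable {E α : Type*} {Ω : Finset (E → α)}

/-- The joint entropy of the coordinates in `A` of a uniformly random element of `Ω`. -/
def coordEntropy (Ω : Finset (E → α)) (A : Finset E) : ℝ :=
  entropy Ω A.restrict

/-- The conditional entropy of the coordinate `e` of a uniformly random element of `Ω`, given its
coordinates in `A`. -/
def coordCondEntropy (Ω : Finset (E → α)) (e : E) (A : Finset E) : ℝ :=
  condEntropy Ω (fun w => w e) A.restrict

lemma finsetRestrict_eq_iff {A : Finset E} {v w : E → α} :
    A.restrict v = A.restrict w ↔ ∀ e ∈ A, v e = w e := by
  simp [funext_iff]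

lemma coordEntropy_empty (Ω : Finset (E → α)) : coordEntropy Ω ∅ = 0 := by
  have hle := entropy_le_log_card (A := {isEmptyElim}) (X := (∅ : Finset E).restrict)
    fun w (_ : w ∈ Ω) => Finset.mem_singleton.2 (Subsingleton.elim _ _)
  rw [Finset.card_singleton, Nat.cast_one, Real.log_one] at hle
  exact le_antisymm hle (entropy_nonneg _ _)

lemma coordEntropy_univ [Fintype E] (hΩ : Ω.Nonempty) :
    coordEntropy Ω Finset.univ = Real.log Ω.card :=
  entropy_of_injOn hΩ fun _ _ _ _ h => funext fun e =>
    finsetRestrict_eq_iff.1 h e (Finset.mem_univ e)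

lemma coordCondEntropy_nonneg (Ω : Finset (E → α)) (e : E) (A : Finset E) :
    0 ≤ coordCondEntropy Ω e A :=
  condEntropy_nonneg _ _ _

lemma coordCondEntropy_le_log_card [Fintype α] (Ω : Finset (E → α)) (e : E) (A : Finset E) :
    coordCondEntropy Ω e A ≤ Real.log (Fintype.card α) :=
  condEntropy_le_log_card _ _ _

lemma coordCondEntropy_anti (Ω : Finset (E → α)) (e : E) {A B : Finset E} (hAB : A ⊆ B) :
    coordCondEntropy Ω e B ≤ coordCondEntropy Ω e A :=
  condEntropy_anti _ fun _ _ _ _ h => finsetRestrict_eq_iff.2 fun f hf =>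
    finsetRestrict_eq_iff.1 h f (hAB hf)

variable [DecidableEq E]

lemma coordCondEntropy_image (σ : Equiv.Perm E) (hσ : ∀ w ∈ Ω, w ∘ σ ∈ Ω) (e : E) (A : Finset E) :
    coordCondEntropy Ω (σ e) (A.image σ) = coordCondEntropy Ω e A := by
  have hmap : Ω.map (σ.arrowCongr (Equiv.refl α)).symm.toEmbedding = Ω := by
    refine Finset.eq_of_subset_of_card_le (fun v hv => ?_) (Finset.card_map _).ge
    obtain ⟨w, hw, rfl⟩ := Finset.mem_map.1 hv
    exact hσ w hw
  conv_rhs => rw [coordCondEntropy, ← hmap, condEntropy_map]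
  refine condEntropy_congr (fun _ _ _ _ => Iff.rfl) fun w _ w' _ => ?_
  simp only [Function.comp_apply, finsetRestrict_eq_iff, Finset.forall_mem_image]
  exact Iff.rfl

lemma coordEntropy_union_image {κ : Type*} [Fintype κ] (Ω : Finset (E → α)) (A : Finset E)
    (t : κ → E) : coordEntropy Ω (A ∪ Finset.univ.image t) =
      coordEntropy Ω A + condEntropy Ω (fun w i => w (t i)) A.restrict := by
  rw [coordEntropy, coordEntropy, ← entropy_prod_eq_add_condEntropy]
  refine entropy_congr fun w _ w' _ => ?_
  simp only [Prod.mk.injEq, finsetRestrict_eq_iff, funext_iff (α := κ), Finset.mem_union, or_imp,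
    forall_and, Finset.mem_image, Finset.mem_univ, true_and, forall_exists_index,
    forall_apply_eq_imp_iff]

lemma coordEntropy_insert (Ω : Finset (E → α)) (e : E) (A : Finset E) :
    coordEntropy Ω (insert e A) = coordEntropy Ω A + coordCondEntropy Ω e A := by
  rw [coordEntropy, coordEntropy, coordCondEntropy, ← entropy_prod_eq_add_condEntropy]
  refine entropy_congr fun w _ w' _ => ?_
  simp only [finsetRestrict_eq_iff, Prod.mk.injEq, Finset.forall_mem_insert, and_comm]

lemma coordEntropy_union_le (Ω : Finset (E → α)) (A D : Finset E) :
    coordEntropy Ω (A ∪ D) ≤ coordEntropy Ω A + ∑ e ∈ D, coordCondEntropy Ω e A := by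
  induction D using Finset.induction_on with
  | empty => simp
  | insert e D heD ih =>
    rw [Finset.union_insert, coordEntropy_insert, Finset.sum_insert heD]
    linarith [coordCondEntropy_anti Ω e (Finset.subset_union_left : A ⊆ A ∪ D)]

lemma le_coordEntropy_union (Ω : Finset (E → α)) (A D : Finset E) :
    coordEntropy Ω A + ∑ e ∈ D, coordCondEntropy Ω e (A ∪ D.erase e) ≤ coordEntropy Ω (A ∪ D) := by
  induction D using Finset.induction_on with
  | empty => simp
  | insert e D heD ih =>
    have hanti : ∑ f ∈ D, coordCondEntropy Ω f (A ∪ (insert e D).erase f) ≤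
        ∑ f ∈ D, coordCondEntropy Ω f (A ∪ D.erase f) :=
      Finset.sum_le_sum fun f _ => coordCondEntropy_anti Ω f <|
        Finset.union_subset_union_right <| Finset.erase_subset_erase f <| Finset.subset_insert e D
    rw [Finset.union_insert, coordEntropy_insert, Finset.sum_insert heD, Finset.erase_insert heD]
    linarith

lemma log_card_le_of_coordCondEntropy_le [Fintype E] [Fintype α] (hΩ : Ω.Nonempty)
    {A : Finset E} {h : ℝ} (hA : ∀ e ∉ A, coordCondEntropy Ω e A ≤ h) :
    Real.log Ω.card ≤ A.card * Real.log (Fintype.card α) + Aᶜ.card * h := by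
  have hinner : coordEntropy Ω (∅ ∪ A) ≤ A.card * Real.log (Fintype.card α) := by
    refine (coordEntropy_union_le Ω ∅ A).trans ?_
    rw [coordEntropy_empty, zero_add, ← nsmul_eq_mul]
    exact Finset.sum_le_card_nsmul _ _ _ fun e _ => coordCondEntropy_le_log_card Ω e ∅
  have houter : ∑ e ∈ Aᶜ, coordCondEntropy Ω e A ≤ Aᶜ.card * h := by
    rw [← nsmul_eq_mul]
    exact Finset.sum_le_card_nsmul _ _ _ fun e he => hA e (Finset.mem_compl.1 he)
  rw [← coordEntropy_univ hΩ, ← Finset.union_compl A]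
  rw [Finset.empty_union] at hinner
  linarith [coordEntropy_union_le Ω A Aᶜ]

end Coordinates

section Edges

variable {n : ℕ}

lemma edgeOf_self (e : EdgeType n) : edgeOf e.1.1 e.1.2 e.2.ne = e :=
  dif_pos e.2

lemma exists_eq_edgeOf (e : EdgeType n) : ∃ i j, ∃ h : i ≠ j, e = edgeOf i j h :=
  ⟨e.1.1, e.1.2, e.2.ne, (edgeOf_self e).symm⟩

/-- The unordered pair of endpoints of an edge of the complete graph. -/
def endpoints (e : EdgeType n) : {z : Sym2 (Fin n) // ¬z.IsDiag} :=
  ⟨s(e.1.1, e.1.2), e.2.ne⟩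

lemma endpoints_edgeOf {i j : Fin n} (h : i ≠ j) : (endpoints (edgeOf i j h)).1 = s(i, j) := by
  by_cases hij : i < j
  · simp [endpoints, edgeOf, hij]
  · simp [endpoints, edgeOf, hij, Sym2.eq_swap]

lemma endpoints_bijective : Function.Bijective (endpoints (n := n)) := by
  constructor
  · rintro ⟨⟨i, j⟩, hij⟩ ⟨⟨k, l⟩, hkl⟩ h
    rcases Sym2.eq_iff.1 (congrArg Subtype.val h) with ⟨rfl, rfl⟩ | ⟨rfl, rfl⟩
    · rfl
    · exact absurd hij hkl.not_gt
  · rintro ⟨⟨i, j⟩, h⟩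
    exact ⟨edgeOf i j h, Subtype.ext (endpoints_edgeOf h)⟩

lemma edgeOf_eq_iff {i j : Fin n} {h : i ≠ j} {e : EdgeType n} :
    edgeOf i j h = e ↔ s(i, j) = endpoints e := by
  rw [← endpoints_bijective.1.eq_iff, Subtype.ext_iff, endpoints_edgeOf]

lemma edgeOf_comm (i j : Fin n) (h : i ≠ j) : edgeOf i j h = edgeOf j i h.symm := by
  rw [edgeOf_eq_iff, endpoints_edgeOf, Sym2.eq_swap]

lemma card_edgeType (n : ℕ) : Fintype.card (EdgeType n) = n.choose 2 := by
  rw [Fintype.card_of_bijective endpoints_bijective, Sym2.card_subtype_not_diag, Fintype.card_fin]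

/-- The action of a permutation of the vertices on the edges of the complete graph. -/
def edgeMap (τ : Equiv.Perm (Fin n)) (e : EdgeType n) : EdgeType n :=
  edgeOf (τ e.1.1) (τ e.1.2) (τ.injective.ne e.2.ne)

lemma endpoints_edgeMap (τ : Equiv.Perm (Fin n)) (e : EdgeType n) :
    (endpoints (edgeMap τ e)).1 = (endpoints e).1.map τ :=
  endpoints_edgeOf _

lemma edgeMap_edgeMap_of_leftInverse {σ τ : Equiv.Perm (Fin n)}
    (h : Function.LeftInverse σ τ) (e : EdgeType n) : edgeMap σ (edgeMap τ e) = e := by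
  apply endpoints_bijective.1
  rw [Subtype.ext_iff, endpoints_edgeMap, endpoints_edgeMap, Sym2.map_map, h.comp_eq_id,
    Sym2.map_id, id]

/-- The permutation of the edges of the complete graph induced by a permutation of its vertices. -/
def edgePerm (τ : Equiv.Perm (Fin n)) : Equiv.Perm (EdgeType n) where
  toFun := edgeMap τ
  invFun := edgeMap τ.symm
  left_inv := edgeMap_edgeMap_of_leftInverse τ.symm_apply_apply
  right_inv := edgeMap_edgeMap_of_leftInverse τ.apply_symm_apply

lemma edgePerm_edgeOf (τ : Equiv.Perm (Fin n)) {i j : Fin n} (h : i ≠ j) :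
    edgePerm τ (edgeOf i j h) = edgeOf (τ i) (τ j) (τ.injective.ne h) := by
  rw [eq_comm, edgeOf_eq_iff, ← Sym2.map_mk, ← endpoints_edgeOf h]
  exact (endpoints_edgeMap τ _).symm

lemma dval_of_ne (d : EdgeType n → ℝ) {i j : Fin n} (h : i ≠ j) : dval d i j = d (edgeOf i j h) :=
  dif_neg h

/-- The edges of the complete graph with at least one endpoint in `V`. -/
def incidentEdges (V : Finset (Fin n)) : Finset (EdgeType n) :=
  {e | e.1.1 ∈ V ∨ e.1.2 ∈ V}

lemma edgeOf_mem_incidentEdges {V : Finset (Fin n)} {i j : Fin n} (h : i ≠ j) :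
    edgeOf i j h ∈ incidentEdges V ↔ i ∈ V ∨ j ∈ V := by
  rw [incidentEdges, Finset.mem_filter_univ]
  by_cases hij : i < j
  · simp [edgeOf, hij]
  · simp [edgeOf, hij, or_comm]

lemma incidentEdges_mono {V W : Finset (Fin n)} (h : V ⊆ W) : incidentEdges V ⊆ incidentEdges W :=
  Finset.monotone_filter_right _ fun _ _ => Or.imp (@h _) (@h _)

lemma incidentEdges_image (τ : Equiv.Perm (Fin n)) (V : Finset (Fin n)) :
    incidentEdges (V.image τ) = (incidentEdges V).image (edgePerm τ) := by
  ext e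
  obtain ⟨e, rfl⟩ := (edgePerm τ).surjective e
  obtain ⟨i, j, h, rfl⟩ := exists_eq_edgeOf e
  rw [(edgePerm τ).injective.mem_finset_image, edgePerm_edgeOf, edgeOf_mem_incidentEdges,
    edgeOf_mem_incidentEdges, τ.injective.mem_finset_image, τ.injective.mem_finset_image]

lemma card_incidentEdges_le (V : Finset (Fin n)) : (incidentEdges V).card ≤ 2 * V.card * n := by
  have hfst : (Finset.univ.filter fun e : EdgeType n => e.1.1 ∈ V).card ≤
      (V ×ˢ (Finset.univ : Finset (Fin n))).card :=
    Finset.card_le_card_of_injOn Subtype.val (fun e he => by simpa using he)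
      Subtype.val_injective.injOn
  have hsnd : (Finset.univ.filter fun e : EdgeType n => e.1.2 ∈ V).card ≤
      ((Finset.univ : Finset (Fin n)) ×ˢ V).card :=
    Finset.card_le_card_of_injOn Subtype.val (fun e he => by simpa using he)
      Subtype.val_injective.injOn
  rw [Finset.card_product, Finset.card_univ, Fintype.card_fin] at hfst hsnd
  calc (incidentEdges V).card ≤ _ + _ := by
        rw [incidentEdges, Finset.filter_or]
        exact Finset.card_union_le _ _
    _ ≤ V.card * n + n * V.card := add_le_add hfst hsnd
    _ = 2 * V.card * n := by ring

end Edges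

section NearMetrics

variable {n : ℕ}

/-- The edge labellings of the complete graph by integers in `[0, K)` satisfying all triangle
inequalities up to an error of `1`. -/
def nearMetrics (n K : ℕ) : Finset (EdgeType n → Fin K) :=
  {w | ∀ i j k : Fin n, ∀ (hij : i ≠ j) (hjk : j ≠ k) (hik : i ≠ k),
    (w (edgeOf i j hij) : ℕ) ≤ w (edgeOf i k hik) + w (edgeOf k j hjk.symm) + 1}

lemma mem_nearMetrics {K : ℕ} {w : EdgeType n → Fin K} :
    w ∈ nearMetrics n K ↔ ∀ i j k : Fin n, ∀ (hij : i ≠ j) (hjk : j ≠ k) (hik : i ≠ k),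
      (w (edgeOf i j hij) : ℕ) ≤ w (edgeOf i k hik) + w (edgeOf k j hjk.symm) + 1 :=
  Finset.mem_filter_univ w

lemma nearMetrics_nonempty (n K : ℕ) : (nearMetrics n (K + 1)).Nonempty :=
  ⟨fun _ => 0, mem_nearMetrics.2 fun _ _ _ _ _ _ => by simp⟩

lemma comp_edgePerm_mem_nearMetrics {K : ℕ} (τ : Equiv.Perm (Fin n)) {w : EdgeType n → Fin K}
    (hw : w ∈ nearMetrics n K) : w ∘ edgePerm τ ∈ nearMetrics n K :=
  mem_nearMetrics.2 fun i j k hij hjk hik => by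
    simp only [Function.comp_apply, edgePerm_edgeOf]
    exact mem_nearMetrics.1 hw _ _ _ (τ.injective.ne hij) (τ.injective.ne hjk) (τ.injective.ne hik)

/-- The edges of the triangle with vertices `x 0`, `x 1`, `x 2`; the edge `i` is opposite to the
vertex `x i`. -/
def triangleEdge (x : Fin 3 ↪ Fin n) (i : Fin 3) : EdgeType n :=
  edgeOf (x (i + 1)) (x (i + 2)) (x.injective.ne (by decide +revert))

lemma triangleEdge_mem_nearTriangle {K : ℕ} {w : EdgeType n → Fin K} (hw : w ∈ nearMetrics n K)
    (x : Fin 3 ↪ Fin n) : (fun i => w (triangleEdge x i)) ∈ nearTriangle K :=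
  mem_nearTriangle.2 fun i => by
    have h := mem_nearMetrics.1 hw (x (i + 2)) (x (i + 1)) (x i)
      (x.injective.ne (by decide +revert)) (x.injective.ne (by decide +revert))
      (x.injective.ne (by decide +revert))
    have hi : i + 1 + 1 = i + 2 ∧ i + 1 + 2 = i ∧ i + 2 + 1 = i ∧ i + 2 + 2 = i + 1 := by
      clear h
      decide +revert
    rw [edgeOf_comm] at h
    simpa only [triangleEdge, hi] using h

/-- The entropy of the label of the edge `e` in a uniformly random near-metric labelling, given the
labels of all edges meeting `V`. -/
def edgeEntropy (K : ℕ) (V : Finset (Fin n)) (e : EdgeType n) : ℝ :=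
  coordCondEntropy (nearMetrics n K) e (incidentEdges V)

lemma edgeEntropy_eq_of_card_eq (K : ℕ) {V V' : Finset (Fin n)} (hV : V.card = V'.card)
    {e e' : EdgeType n} (he : e ∉ incidentEdges V) (he' : e' ∉ incidentEdges V') :
    edgeEntropy K V e = edgeEntropy K V' e' := by
  obtain ⟨i, j, hij, rfl⟩ := exists_eq_edgeOf e
  obtain ⟨i', j', hij', rfl⟩ := exists_eq_edgeOf e'
  rw [edgeOf_mem_incidentEdges, not_or] at he he'
  obtain ⟨τ, rfl, rfl, rfl⟩ :=
    exists_perm_image_eq_and_apply_eq hV hij hij' he.1 he.2 he'.1 he'.2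
  rw [edgeEntropy, edgeEntropy, incidentEdges_image, ← edgePerm_edgeOf,
    coordCondEntropy_image _ fun w => comp_edgePerm_mem_nearMetrics τ]

lemma triangleEdge_injective (x : Fin 3 ↪ Fin n) : Function.Injective (triangleEdge x) := by
  intro i j h
  rw [triangleEdge, edgeOf_eq_iff, triangleEdge, endpoints_edgeOf, Sym2.eq_iff] at h
  simp only [x.injective.eq_iff] at h
  decide +revert

lemma triangleEdge_mem_incidentEdges_insert (x : Fin 3 ↪ Fin n) {i j : Fin 3} (hij : j ≠ i)
    (V : Finset (Fin n)) : triangleEdge x j ∈ incidentEdges (insert (x i) V) := by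
  have hi : j + 1 = i ∨ j + 2 = i := by decide +revert
  rw [triangleEdge, edgeOf_mem_incidentEdges]
  exact hi.imp (fun h => by rw [h]; exact Finset.mem_insert_self _ _)
    fun h => by rw [h]; exact Finset.mem_insert_self _ _

lemma triangleEdge_notMem_incidentEdges {x : Fin 3 ↪ Fin n} {V : Finset (Fin n)} {i : Fin 3}
    (hx : ∀ j ≠ i, x j ∉ V) : triangleEdge x i ∉ incidentEdges V := by
  rw [triangleEdge, edgeOf_mem_incidentEdges, not_or]
  exact ⟨hx _ (by clear hx; decide +revert), hx _ (by clear hx; decide +revert)⟩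

lemma sum_edgeEntropy_insert_le (K : ℕ) (V : Finset (Fin n)) (x : Fin 3 ↪ Fin n) :
    ∑ i, edgeEntropy K (insert (x i) V) (triangleEdge x i) ≤
      condEntropy (nearMetrics n K) (fun w i => w (triangleEdge x i))
        (incidentEdges V).restrict := by
  have hsub : ∀ i, incidentEdges V ∪ (Finset.univ.image (triangleEdge x)).erase (triangleEdge x i) ⊆
      incidentEdges (insert (x i) V) := fun i => by
    refine Finset.union_subset (incidentEdges_mono (Finset.subset_insert _ _)) fun f hf => ?_
    obtain ⟨hne, hf⟩ := Finset.mem_erase.1 hf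
    obtain ⟨j, -, rfl⟩ := Finset.mem_image.1 hf
    exact triangleEdge_mem_incidentEdges_insert x (fun h => hne (congrArg _ h)) V
  have hle := le_coordEntropy_union (nearMetrics n K) (incidentEdges V)
    (Finset.univ.image (triangleEdge x))
  rw [coordEntropy_union_image, Finset.sum_image (triangleEdge_injective x).injOn] at hle
  exact (Finset.sum_le_sum fun i _ => coordCondEntropy_anti _ _ (hsub i)).trans
    (le_of_add_le_add_left hle)

lemma exists_fin_three_embedding_forall_notMem {V : Finset (Fin n)} {u : Fin n} {e : EdgeType n}
    (hu : u ∉ V) (he : e ∉ incidentEdges (insert u V)) : ∃ x : Fin 3 ↪ Fin n, ∀ i, x i ∉ V := by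
  obtain ⟨i, j, hij, rfl⟩ := exists_eq_edgeOf e
  simp only [edgeOf_mem_incidentEdges, Finset.mem_insert, not_or] at he
  refine ⟨⟨![u, i, j], ?_⟩, by simpa [Fin.forall_fin_succ] using ⟨hu, he.1.2, he.2.2⟩⟩
  simp [Function.Injective, Fin.forall_fin_succ, hij, hij.symm, he, Ne.symm he.1.1, Ne.symm he.2.1]

lemma exists_edgeEntropy_le (K : ℕ) {ε : ℝ} (hε : 0 < ε) :
    ∃ C, 0 ≤ C ∧ ∀ {n : ℕ} {V : Finset (Fin n)} {u : Fin n} {e : EdgeType n},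
      (nearMetrics n K).Nonempty → u ∉ V → e ∉ incidentEdges (insert u V) →
      edgeEntropy K V e ≤ Real.log ((K + 2) / 2) + ε +
        C * (edgeEntropy K V e - edgeEntropy K (insert u V) e) := by
  obtain ⟨C, hC0, hC⟩ := (boxLogCardLE_nearTriangle K).exists_sum_condEntropy_le
    (ε := 3 * ε) (by positivity)
  refine ⟨C, hC0, fun {n V u e} hne hu he => ?_⟩
  obtain ⟨x, hx⟩ := exists_fin_three_embedding_forall_notMem hu he
  have hV : ∀ i, condEntropy (nearMetrics n K) (fun w => w (triangleEdge x i))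
      (incidentEdges V).restrict = edgeEntropy K V e := fun i =>
    edgeEntropy_eq_of_card_eq K rfl (triangleEdge_notMem_incidentEdges fun j _ => hx j)
      fun h => he (incidentEdges_mono (Finset.subset_insert u V) h)
  have hinsert : ∀ i, edgeEntropy K (insert (x i) V) (triangleEdge x i) =
      edgeEntropy K (insert u V) e := fun i =>
    edgeEntropy_eq_of_card_eq K
      (by rw [Finset.card_insert_of_notMem (hx i), Finset.card_insert_of_notMem hu])
      (triangleEdge_notMem_incidentEdges fun j hj => by simpa [hx j] using x.injective.ne hj) he
  have hjoint := sum_edgeEntropy_insert_le K V x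
  have hle := hC (fun w i => w (triangleEdge x i)) (incidentEdges V).restrict hne
    fun w hw => triangleEdge_mem_nearTriangle hw x
  simp only [hV, hinsert, Finset.sum_const, Finset.card_univ, Fintype.card_fin, nsmul_eq_mul,
    Nat.cast_ofNat] at hjoint hle
  linarith [mul_le_mul_of_nonneg_left hjoint hC0]

/-- The first `s` vertices of the complete graph. -/
def firstVertices (n s : ℕ) : Finset (Fin n) :=
  {v | v.val < s}

lemma firstVertices_succ {s : ℕ} (hs : s < n) :
    firstVertices n (s + 1) = insert ⟨s, hs⟩ (firstVertices n s) := by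
  ext v
  simp only [firstVertices, Finset.mem_filter_univ, Finset.mem_insert, Fin.ext_iff]
  omega

lemma card_firstVertices_le (n s : ℕ) : (firstVertices n s).card ≤ s :=
  Fin.card_filter_val_lt.trans_le (min_le_right n s)

lemma exists_edgeEntropy_firstVertices_le (K : ℕ) {ε : ℝ} (hε : 0 < ε) :
    ∃ C, 0 ≤ C ∧ ∀ {n m : ℕ}, 0 < m → m + 2 ≤ n → (nearMetrics n K).Nonempty →
      ∃ s < m, ∀ e ∉ incidentEdges (firstVertices n s), edgeEntropy K (firstVertices n s) e ≤
        Real.log ((K + 2) / 2) + ε + C * (Real.log K / m) := by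
  obtain ⟨C, hC0, hC⟩ := exists_edgeEntropy_le K hε
  refine ⟨C, hC0, fun {n m} hm hmn hne => ?_⟩
  let f : EdgeType n := ⟨(⟨n - 2, by omega⟩, ⟨n - 1, by omega⟩), Fin.mk_lt_mk.2 (by omega)⟩
  have hf : ∀ s ≤ m, f ∉ incidentEdges (firstVertices n s) := fun s hs => by
    have hf' : ¬(n - 2 < s ∨ n - 1 < s) := by omega
    simpa only [incidentEdges, firstVertices, Finset.mem_filter_univ] using hf'
  obtain ⟨s, hsm, hs⟩ := exists_sub_succ_le_div
    (h := fun s => edgeEntropy K (firstVertices n s) f) (M := Real.log K) hm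
    ((coordCondEntropy_le_log_card _ _ _).trans_eq (by rw [Fintype.card_fin]))
    (coordCondEntropy_nonneg _ _ _)
  have hsn : s < n := by omega
  simp only [firstVertices_succ hsn] at hs
  refine ⟨s, hsm, fun e he => ?_⟩
  rw [edgeEntropy_eq_of_card_eq K rfl he (hf s hsm.le)]
  refine (hC hne (by simp [firstVertices]) (firstVertices_succ hsn ▸ hf (s + 1) hsm)).trans ?_
  gcongr

lemma exists_log_card_nearMetrics_le (K : ℕ) {ε : ℝ} (hε : 0 < ε) :
    ∃ C, ∀ {n m : ℕ}, 0 < m → m + 2 ≤ n → (nearMetrics n K).Nonempty →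
      Real.log (nearMetrics n K).card ≤ 2 * m * n * Real.log K +
        n.choose 2 * (Real.log ((K + 2) / 2) + ε + C * (Real.log K / m)) := by
  obtain ⟨C, hC0, hC⟩ := exists_edgeEntropy_firstVertices_le K hε
  refine ⟨C, fun {n m} hm hmn hne => ?_⟩
  obtain ⟨s, hsm, hs⟩ := hC hm hmn hne
  have hlog := log_card_le_of_coordCondEntropy_le hne hs
  rw [Fintype.card_fin] at hlog
  have hlogK : 0 ≤ Real.log (((K : ℝ) + 2) / 2) :=
    Real.log_nonneg (by linarith [K.cast_nonneg (α := ℝ)])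
  have hinc : (incidentEdges (firstVertices n s)).card ≤ 2 * m * n :=
    (card_incidentEdges_le _).trans <| by
      have := (card_firstVertices_le n s).trans hsm.le
      gcongr
  refine hlog.trans ?_
  gcongr
  · exact_mod_cast hinc
  · exact (Finset.card_le_univ _).trans_eq (card_edgeType n)

lemma eventually_log_card_nearMetrics_le (K : ℕ) {δ : ℝ} (hδ : 0 < δ) : ∀ᶠ n : ℕ in atTop,
    Real.log (nearMetrics n (K + 1)).card ≤
      n.choose 2 * (Real.log (((K + 1 : ℕ) + 2) / 2) + δ) := by
  obtain ⟨C, hC⟩ := exists_log_card_nearMetrics_le (K + 1) (ε := δ / 3) (by positivity)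
  obtain ⟨m, hm, hCm⟩ : ∃ m : ℕ, 0 < m ∧ C * (Real.log (K + 1 : ℕ) / m) ≤ δ / 3 := by
    have hlim : Tendsto (fun m : ℕ => C * (Real.log (K + 1 : ℕ) / m)) atTop (nhds 0) := by
      simpa using (tendsto_const_div_atTop_nhds_zero_nat (Real.log (K + 1 : ℕ))).const_mul C
    exact ((eventually_gt_atTop 0).and (hlim.eventually_le_const (by positivity))).exists
  filter_upwards [eventually_ge_atTop (m + 2), eventually_mul_le_mul_choose_two
    (2 * m * Real.log (K + 1 : ℕ)) (δ := δ / 3) (by positivity)] with n hmn hn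
  have hle := hC hm hmn (nearMetrics_nonempty n K)
  have := mul_le_mul_of_nonneg_left hCm (n.choose 2).cast_nonneg
  linarith

end NearMetrics

section Volume

variable {n : ℕ}

lemma pi_Icc_half_one_subset_metricPolytope (n : ℕ) :
    (Set.univ.pi fun _ => Icc (1 / 2) (1 / 2 + 1 / 2)) ⊆ metricPolytope n := by
  intro d hd
  have hd' : ∀ e, 1 / 2 ≤ d e ∧ d e ≤ 1 / 2 + 1 / 2 := fun e => hd e (mem_univ e)
  refine ⟨fun e => ⟨by linarith [hd' e], by linarith [hd' e]⟩, fun i j k hij hjk hik => ?_⟩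
  rw [dval_of_ne d hij, dval_of_ne d hik, dval_of_ne d hjk.symm]
  linarith [hd' (edgeOf i j hij), hd' (edgeOf i k hik), hd' (edgeOf k j hjk.symm)]

lemma half_pow_le_volume_metricPolytope (n : ℕ) :
    ENNReal.ofReal (1 / 2) ^ n.choose 2 ≤ volume (metricPolytope n) := by
  rw [← card_edgeType, ← volume_pi_Icc_add fun _ => 1 / 2]
  exact measure_mono (pi_Icc_half_one_subset_metricPolytope n)

lemma exists_mem_nearMetrics_forall_eq_floor {k : ℕ} {d : EdgeType n → ℝ}
    (hd : d ∈ metricPolytope n) :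
    ∃ w ∈ nearMetrics n (k + 1), ∀ e, (w e : ℕ) = ⌊k * d e⌋₊ := by
  obtain ⟨hd01, htri⟩ := hd
  have hfloor : ∀ e, ⌊k * d e⌋₊ < k + 1 := fun e =>
    Nat.lt_succ_of_le <| Nat.floor_le_of_le <| mul_le_of_le_one_right k.cast_nonneg (hd01 e).2
  refine ⟨fun e => ⟨⌊k * d e⌋₊, hfloor e⟩, mem_nearMetrics.2 fun i j l hij hjl hil => ?_,
    fun _ => rfl⟩
  have hijl := htri i j l hij hjl hil
  rw [dval_of_ne d hij, dval_of_ne d hil, dval_of_ne d hjl.symm] at hijl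
  have hmul := mul_le_mul_of_nonneg_left hijl k.cast_nonneg
  rw [← Nat.lt_succ_iff, Nat.floor_lt (mul_nonneg k.cast_nonneg (hd01 _).1)]
  push_cast
  linarith [Nat.lt_floor_add_one (k * d (edgeOf i l hil)),
    Nat.lt_floor_add_one (k * d (edgeOf l j hjl.symm))]

lemma metricPolytope_subset_biUnion_nearMetrics (n : ℕ) {k : ℕ} (hk : 0 < k) :
    metricPolytope n ⊆ ⋃ w ∈ nearMetrics n (k + 1),
      Set.univ.pi fun e => Icc ((w e : ℝ) / k) ((w e : ℝ) / k + 1 / k) := by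
  intro d hd
  have hk' : (0 : ℝ) < k := Nat.cast_pos.2 hk
  obtain ⟨w, hw, hfloor⟩ := exists_mem_nearMetrics_forall_eq_floor (k := k) hd
  refine mem_iUnion₂.2 ⟨w, hw, fun e _ => ?_⟩
  rw [mem_Icc, ← add_div, div_le_iff₀' hk', le_div_iff₀' hk', hfloor]
  exact ⟨Nat.floor_le (mul_nonneg hk'.le (hd.1 e).1), (Nat.lt_floor_add_one _).le⟩

lemma volume_metricPolytope_le (n : ℕ) {k : ℕ} (hk : 0 < k) : volume (metricPolytope n) ≤
    (nearMetrics n (k + 1)).card * ENNReal.ofReal (1 / k) ^ n.choose 2 := by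
  refine (measure_mono (metricPolytope_subset_biUnion_nearMetrics n hk)).trans
    ((measure_biUnion_finset_le _ _).trans_eq ?_)
  simp only [volume_pi_Icc_add, card_edgeType, Finset.sum_const, nsmul_eq_mul]

lemma volume_metricPolytope_ne_top (n : ℕ) : volume (metricPolytope n) ≠ ⊤ := by
  refine ne_top_of_le_ne_top ?_ (volume_metricPolytope_le n one_pos)
  exact ENNReal.mul_ne_top (ENNReal.natCast_ne_top _) (ENNReal.pow_ne_top ENNReal.ofReal_ne_top)

lemma neg_mul_log_two_le_log_volume_metricPolytope (n : ℕ) :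
    -(n.choose 2 * Real.log 2) ≤ Real.log (volume (metricPolytope n)).toReal := by
  have h := ENNReal.toReal_mono (volume_metricPolytope_ne_top n)
    (half_pow_le_volume_metricPolytope n)
  rw [ENNReal.toReal_pow, ENNReal.toReal_ofReal (by positivity)] at h
  calc -(n.choose 2 * Real.log 2) = Real.log ((1 / 2) ^ n.choose 2) := by
        rw [Real.log_pow, one_div, Real.log_inv, mul_neg]
    _ ≤ Real.log (volume (metricPolytope n)).toReal := Real.log_le_log (by positivity) h

lemma volume_metricPolytope_toReal_pos (n : ℕ) : 0 < (volume (metricPolytope n)).toReal := by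
  refine ENNReal.toReal_pos (fun h => ?_) (volume_metricPolytope_ne_top n)
  simpa [h] using half_pow_le_volume_metricPolytope n

lemma log_volume_metricPolytope_le (n : ℕ) {k : ℕ} (hk : 0 < k) :
    Real.log (volume (metricPolytope n)).toReal ≤
      Real.log (nearMetrics n (k + 1)).card - n.choose 2 * Real.log k := by
  have hcard : (0 : ℝ) < (nearMetrics n (k + 1)).card :=
    Nat.cast_pos.2 (nearMetrics_nonempty n k).card_pos
  have h := ENNReal.toReal_mono (ENNReal.mul_ne_top (ENNReal.natCast_ne_top _)
    (ENNReal.pow_ne_top ENNReal.ofReal_ne_top)) (volume_metricPolytope_le n hk)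
  rw [ENNReal.toReal_mul, ENNReal.toReal_pow, ENNReal.toReal_ofReal (by positivity),
    ENNReal.toReal_natCast] at h
  calc Real.log (volume (metricPolytope n)).toReal
      ≤ Real.log ((nearMetrics n (k + 1)).card * (1 / k) ^ n.choose 2) :=
        Real.log_le_log (volume_metricPolytope_toReal_pos n) h
    _ = Real.log (nearMetrics n (k + 1)).card - n.choose 2 * Real.log k := by
        rw [Real.log_mul hcard.ne' (by positivity), Real.log_pow, one_div, Real.log_inv]
        ring

lemma eventually_log_volume_metricPolytope_le {δ : ℝ} (hδ : 0 < δ) : ∀ᶠ n : ℕ in atTop,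
    Real.log (volume (metricPolytope n)).toReal ≤ n.choose 2 * (δ - Real.log 2) := by
  have hlim : Tendsto (fun k : ℕ => Real.log (1 + 3 / (k : ℝ))) atTop (nhds 0) := by
    simpa using ((tendsto_const_div_atTop_nhds_zero_nat (3 : ℝ)).const_add 1).log (by simp)
  obtain ⟨k, hk, hkδ⟩ := ((eventually_gt_atTop 0).and
    (hlim.eventually_le_const (half_pos hδ))).exists
  have hk' : (0 : ℝ) < k := Nat.cast_pos.2 hk
  have hlog : Real.log (((k + 1 : ℕ) + 2) / 2) =
      Real.log k - Real.log 2 + Real.log (1 + 3 / k) := by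
    rw [← Real.log_div hk'.ne' two_ne_zero, ← Real.log_mul (by positivity) (by positivity)]
    congr 1
    push_cast
    field_simp
    ring
  filter_upwards [eventually_log_card_nearMetrics_le k (half_pos hδ)] with n hn
  calc Real.log (volume (metricPolytope n)).toReal
      ≤ n.choose 2 * (Real.log (((k + 1 : ℕ) + 2) / 2) + δ / 2) - n.choose 2 * Real.log k :=
        (log_volume_metricPolytope_le n hk).trans (sub_le_sub_right hn _)
    _ = n.choose 2 * (Real.log (1 + 3 / k) + δ / 2 - Real.log 2) := by rw [hlog]; ring
    _ ≤ n.choose 2 * (δ - Real.log 2) := by gcongr; linarith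

end Volume

/-- **Theorem (rough estimate for the volume of the metric polytope).**
`vol(M_n) = (1/2)^{C(n,2) + o(n²)}`, i.e. `(-log vol(M_n))/C(n,2) → log 2`. -/
theorem volume_metric_polytope :
    Tendsto (fun n : ℕ =>
      -(Real.log ((volume (metricPolytope n)).toReal)) / (n.choose 2 : ℝ))
      atTop (nhds (Real.log 2)) := by
  have hchoose : ∀ᶠ n : ℕ in atTop, (0 : ℝ) < n.choose 2 :=
    (eventually_ge_atTop 2).mono fun n hn => Nat.cast_pos.2 (Nat.choose_pos hn)
  refine tendsto_order.2 ⟨fun a ha => ?_, fun b hb => ?_⟩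
  · filter_upwards [hchoose, eventually_log_volume_metricPolytope_le (half_pos (sub_pos.2 ha))]
      with n hpos hle
    rw [lt_div_iff₀ hpos]
    linarith [mul_lt_mul_of_pos_left ha hpos]
  · filter_upwards [hchoose] with n hpos
    rw [div_lt_iff₀ hpos]
    linarith [neg_mul_log_two_le_log_volume_metricPolytope n, mul_lt_mul_of_pos_left hb hpos]

end
end
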